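/- arXiv:2010.03727 — 2 statements merged into one kernel-verified Lean document; each statement's English description precedes it below -/
import Mathlib

section
/- For every real z with 0 < z < 1, with √(z²−z) = i√(z−z²) and w = √(1 − 2z − 2√(z² − z)) (principal branch), one has ₄F₃(1/4, 1/4, 3/4, 3/4; 1/2, 1, 1; z) = (4/π²)·K(1/2 − 1/(2w))·K(1/2 − w/2), as an identity between complex numbers with K extended analytically. -/
noncomputable def poch (a : ℝ) (n : ℕ) : ℝ := ∏ i ∈ Finset.range n, (a + i)

/-- Complete elliptic integral of the first kind with (complex) parameter `m`:
`K(m) = ∫₀^{π/2} dθ / √(1 - m sin²θ)`, with the principal square root. -/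
noncomputable def ellK (m : ℂ) : ℂ :=
  ∫ θ in (0:ℝ)..(Real.pi/2), ((1 : ℂ) - m * (Real.sin θ : ℂ)^2) ^ (-(1/2) : ℂ)

/-!
Write `P₋ₐ(w) = ₂F₁(a, 1-a; 1; (1-w)/2) = ∑ cₙ ((1-w)/2)ⁿ`, so that `K(m) = (π/2) P₋ₐ(1-2m)` for
`a = 1/2`; the identity is this case of a `₄F₃` formula for `P₋ₐ(w) P₋ₐ(w⁻¹)`. The products `cᵢ cⱼ`
expand as `∑ₖ cₖ L(k,i,j)` with integers `L` not depending on `a`, so the product of the series in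
`u` and `v` is `∑ₖ cₖ ∑ᵢⱼ L(k,i,j) uⁱ vʲ`. The inner sum is, up to sign, the coefficient of `Xᵏ` in
`((1 - u(1+X)) (1 - v(1+X)))ᵏ`. For `u = (1-w⁻¹)/2` and `v = (1-w)/2` one has `u + v = 2uv`, the
linear term of the quadratic drops out, and the inner sum is zero for odd `k` and
`C(2n,n) (uv(1-uv))ⁿ` for `k = 2n`.

The triple sum converges absolutely only for small `u` and `v`. Parametrizing `w = exp(iφ)` by
`s = sin φ`, where `s² = 4uv(1-uv)`, both sides are analytic in the unit disc of `s`.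
-/

open Finset Metric

/-! ### Pochhammer symbols and hypergeometric coefficients -/

lemma ascPochhammer_eval_eq_prod_range {R : Type*} [CommSemiring R] (a : R) (n : ℕ) :
    (ascPochhammer R n).eval a = ∏ i ∈ range n, (a + i) := by
  induction n with
  | zero => simp
  | succ n ih => rw [ascPochhammer_succ_eval, prod_range_succ, ih]

section Coefficients

variable {𝕂 : Type*} [Field 𝕂] [CharZero 𝕂]

lemma ascPochhammer_eval_two_mul (a : 𝕂) (n : ℕ) :
    (ascPochhammer 𝕂 (2 * n)).eval a =
      4 ^ n * (ascPochhammer 𝕂 n).eval (a / 2) * (ascPochhammer 𝕂 n).eval ((a + 1) / 2) := by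
  induction n with
  | zero => simp
  | succ n ih =>
    rw [Nat.mul_succ, ascPochhammer_succ_eval, ascPochhammer_succ_eval, ih,
      ascPochhammer_succ_eval, ascPochhammer_succ_eval]
    push_cast
    ring

lemma cast_factorial_two_mul (n : ℕ) :
    ((2 * n).factorial : 𝕂) = 4 ^ n * (ascPochhammer 𝕂 n).eval (1 / 2) * n.factorial := by
  have h := ascPochhammer_eval_two_mul (1 : 𝕂) n
  rwa [one_add_one_eq_two, div_self two_ne_zero, ascPochhammer_eval_one,
    ascPochhammer_eval_one] at h

/-- The coefficient `(a)ₙ(1-a)ₙ / n!²` of the Legendre function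
`P₋ₐ(1 - 2x) = ₂F₁(a, 1-a; 1; x)`. -/
noncomputable def legendreCoeff (a : 𝕂) (n : ℕ) : 𝕂 :=
  ordinaryHypergeometricCoefficient a (1 - a) 1 n

lemma legendreCoeff_eq_div (a : 𝕂) (n : ℕ) :
    legendreCoeff a n =
      (ascPochhammer 𝕂 n).eval a * (ascPochhammer 𝕂 n).eval (1 - a) / n.factorial ^ 2 := by
  rw [legendreCoeff, ordinaryHypergeometricCoefficient, ascPochhammer_eval_one]
  ring

lemma legendreCoeff_zero (a : 𝕂) : legendreCoeff a 0 = 1 := by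
  simp [legendreCoeff_eq_div]

lemma succ_sq_mul_legendreCoeff_succ (a : 𝕂) (n : ℕ) :
    (n + 1 : 𝕂) ^ 2 * legendreCoeff a (n + 1) =
      (n * (n + 1) + a * (1 - a)) * legendreCoeff a n := by
  have hn : (n.factorial : 𝕂) ≠ 0 := by exact_mod_cast n.factorial_ne_zero
  have hs : (n + 1 : 𝕂) ≠ 0 := by exact_mod_cast n.succ_ne_zero
  simp only [legendreCoeff_eq_div, ascPochhammer_succ_eval, Nat.factorial_succ]
  push_cast
  field_simp
  ring

/-- The coefficient `(a₁)ₙ(a₂)ₙ(a₃)ₙ(a₄)ₙ / ((b₁)ₙ(b₂)ₙ(b₃)ₙ n!)` of the generalized hypergeometric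
series `₄F₃`. -/
noncomputable def fourF3Coeff (a₁ a₂ a₃ a₄ b₁ b₂ b₃ : 𝕂) (n : ℕ) : 𝕂 :=
  (ascPochhammer 𝕂 n).eval a₁ * (ascPochhammer 𝕂 n).eval a₂ * (ascPochhammer 𝕂 n).eval a₃ *
      (ascPochhammer 𝕂 n).eval a₄ /
    ((ascPochhammer 𝕂 n).eval b₁ * (ascPochhammer 𝕂 n).eval b₂ * (ascPochhammer 𝕂 n).eval b₃ *
      n.factorial)

lemma fourF3Coeff_eq_legendreCoeff_mul_centralBinom (a : 𝕂) (n : ℕ) :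
    fourF3Coeff (a / 2) ((1 - a) / 2) ((a + 1) / 2) (1 - a / 2) (1 / 2) 1 1 n =
      legendreCoeff a (2 * n) * (n.centralBinom / 4 ^ n) := by
  have hbinom : (n.centralBinom : 𝕂) = (2 * n).factorial / n.factorial ^ 2 := by
    rw [Nat.centralBinom, Nat.cast_choose 𝕂 (Nat.le_mul_of_pos_left n two_pos), two_mul,
      Nat.add_sub_cancel, sq]
  have hfac := cast_factorial_two_mul (𝕂 := 𝕂) n
  have hfac_ne : ((2 * n).factorial : 𝕂) ≠ 0 := by exact_mod_cast (2 * n).factorial_ne_zero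
  have hn : (n.factorial : 𝕂) ≠ 0 := by exact_mod_cast n.factorial_ne_zero
  have hhalf : (ascPochhammer 𝕂 n).eval (1 / 2) ≠ 0 :=
    right_ne_zero_of_mul (left_ne_zero_of_mul (hfac ▸ hfac_ne))
  rw [fourF3Coeff, hbinom, legendreCoeff_eq_div, hfac, ascPochhammer_eval_two_mul,
    ascPochhammer_eval_two_mul, show (1 - a + 1) / 2 = 1 - a / 2 by ring, ascPochhammer_eval_one]
  field_simp

end Coefficients

/-! ### Linearization of products of Legendre coefficients -/

/-- The structure constants of the linearization
`legendreCoeff a i * legendreCoeff a j = ∑ k, legendreCoeff a k * linCoeff k i j`. They do not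
depend on `a`, and vanish unless `max i j ≤ k ≤ i + j`. -/
def linCoeff (k i j : ℕ) : ℤ :=
  (-1) ^ (i + j + k) * k.choose i * k.choose j * (i + j).choose k

lemma linCoeff_eq_zero_of_add_lt {k i j : ℕ} (h : i + j < k) : linCoeff k i j = 0 := by
  simp [linCoeff, Nat.choose_eq_zero_of_lt h]

lemma linCoeff_eq_zero_of_lt_left {k i : ℕ} (j : ℕ) (h : k < i) : linCoeff k i j = 0 := by
  simp [linCoeff, Nat.choose_eq_zero_of_lt h]

lemma linCoeff_eq_zero_of_lt_right {k j : ℕ} (i : ℕ) (h : k < j) : linCoeff k i j = 0 := by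
  simp [linCoeff, Nat.choose_eq_zero_of_lt h]

lemma linCoeff_self_zero_left (k : ℕ) : linCoeff k 0 k = 1 := by
  simp [linCoeff, ← two_mul]

lemma succ_mul_choose_succ_int (n k : ℕ) :
    (k + 1 : ℤ) * n.choose (k + 1) = (n - k) * n.choose k := by
  rcases le_or_gt k n with h | h
  · rw [← Nat.cast_sub h]
    have := Nat.choose_succ_right_eq n k
    exact_mod_cast (by linarith : (k + 1) * n.choose (k + 1) = (n - k) * n.choose k)
  · simp [Nat.choose_eq_zero_of_lt h, Nat.choose_eq_zero_of_lt (h.trans k.lt_succ_self)]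

lemma succ_mul_choose_int (n k : ℕ) :
    (n + 1 : ℤ) * n.choose k = (n + 1 - k) * (n + 1).choose k := by
  rcases le_or_gt k (n + 1) with h | h
  · have := Nat.choose_mul_succ_eq n k
    rw [← Nat.cast_succ, ← Nat.cast_sub h]
    exact_mod_cast (by linarith : (n + 1) * n.choose k = (n + 1 - k) * (n + 1).choose k)
  · simp [Nat.choose_eq_zero_of_lt h, Nat.choose_eq_zero_of_lt (n.lt_succ_self.trans h)]

lemma linCoeff_zero_succ (i j : ℕ) :
    (i + 1 : ℤ) ^ 2 * linCoeff 0 (i + 1) j = i * (i + 1) * linCoeff 0 i j := by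
  rcases i with _ | i <;> simp [linCoeff]

lemma linCoeff_succ_succ (k i j : ℕ) :
    (i + 1 : ℤ) ^ 2 * linCoeff (k + 1) (i + 1) j = (k + 1) ^ 2 * linCoeff k i j
      + (i * (i + 1) - (k + 1) * (k + 2)) * linCoeff (k + 1) i j := by
  have h1 := succ_mul_choose_succ_int (k + 1) i
  have h2 := succ_mul_choose_int k i
  have h3 := succ_mul_choose_int k j
  have h4 := succ_mul_choose_succ_int (i + j) k
  have h5 := Nat.choose_succ_succ (i + j) k
  rw [linCoeff, linCoeff, linCoeff, add_right_comm i 1 j, h5]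
  push_cast at *
  linear_combination (-1) ^ (i + j + k) * ((i + 1) * (k + 1).choose j *
      ((i + j).choose k + (i + j).choose (k + 1)) * h1
    - (i + j).choose k * (k + 1) * k.choose j * h2
    - (i + j).choose k * (k + 1 - i) * (k + 1).choose i * h3
    - (k + 1 - i) * (k + 1).choose i * (k + 1).choose j * h4)

section Linearization

variable {𝕂 : Type*} [Field 𝕂] [CharZero 𝕂]

/- Weighted by `legendreCoeff a`, the terms of `linCoeff_succ_succ` whose factor depends on `k`
telescope, up to `a * (1 - a)` times the sum itself. -/
lemma sum_range_legendreCoeff_mul_linCoeff_succ (a : 𝕂) (i j N : ℕ) :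
    (i + 1 : 𝕂) ^ 2 * ∑ k ∈ range (N + 1), legendreCoeff a k * linCoeff k (i + 1) j =
      (i * (i + 1) + a * (1 - a)) * ∑ k ∈ range (N + 1), legendreCoeff a k * linCoeff k i j
        - (N + 1) ^ 2 * legendreCoeff a (N + 1) * linCoeff N i j := by
  induction N with
  | zero =>
    have hlin : (i + 1 : 𝕂) ^ 2 * linCoeff 0 (i + 1) j = i * (i + 1) * linCoeff 0 i j := by
      exact_mod_cast linCoeff_zero_succ i j
    have hcoeff := succ_sq_mul_legendreCoeff_succ a 0
    simp only [zero_add, sum_range_one]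
    push_cast at hcoeff ⊢
    linear_combination legendreCoeff a 0 * hlin + linCoeff 0 i j * hcoeff
  | succ N ih =>
    have hlin : (i + 1 : 𝕂) ^ 2 * linCoeff (N + 1) (i + 1) j = (N + 1) ^ 2 * linCoeff N i j
        + (i * (i + 1) - (N + 1) * (N + 2)) * linCoeff (N + 1) i j := by
      exact_mod_cast linCoeff_succ_succ N i j
    have hcoeff := succ_sq_mul_legendreCoeff_succ a (N + 1)
    rw [sum_range_succ, sum_range_succ (fun k => legendreCoeff a k * linCoeff k i j)]
    push_cast at hcoeff ⊢
    linear_combination ih + legendreCoeff a (N + 1) * hlin + linCoeff (N + 1) i j * hcoeff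

theorem sum_legendreCoeff_mul_linCoeff (a : 𝕂) (i j : ℕ) :
    ∑ k ∈ range (i + j + 1), legendreCoeff a k * linCoeff k i j =
      legendreCoeff a i * legendreCoeff a j := by
  induction i with
  | zero =>
    rw [zero_add, sum_range_succ, linCoeff_self_zero_left, legendreCoeff_zero, sum_eq_zero]
    · simp
    · intro k hk
      simp [linCoeff_eq_zero_of_lt_right 0 (mem_range.1 hk)]
  | succ i ih =>
    have hi : (i + 1 : 𝕂) ^ 2 ≠ 0 := pow_ne_zero _ (by exact_mod_cast i.succ_ne_zero)
    have hzero : linCoeff (i + j + 1) i j = 0 := linCoeff_eq_zero_of_add_lt (Nat.lt_succ_self _)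
    apply mul_left_cancel₀ hi
    rw [add_right_comm i 1 j, sum_range_legendreCoeff_mul_linCoeff_succ, sum_range_succ, ih, hzero]
    linear_combination -legendreCoeff a j * succ_sq_mul_legendreCoeff_succ a i

end Linearization

/-! ### The generating polynomial of the linearization coefficients -/

section GeneratingPolynomial

open Polynomial

variable {R : Type*} [CommRing R]

lemma one_sub_C_mul_one_add_X_pow (w : R) (k : ℕ) :
    (1 - C w * (1 + X)) ^ k =
      ∑ i ∈ range (k + 1), C ((-1) ^ i * k.choose i * w ^ i) * (1 + X) ^ i := by
  rw [sub_eq_neg_add, add_pow]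
  refine sum_congr rfl fun i _ => ?_
  simp only [one_pow, mul_one, map_mul, map_pow, map_neg, map_one, map_natCast]
  rw [neg_pow, mul_pow]
  ring

lemma coeff_one_sub_C_mul_one_add_X_pow_mul (u v : R) (k : ℕ) :
    ((1 - C u * (1 + X)) ^ k * (1 - C v * (1 + X)) ^ k).coeff k =
      (-1) ^ k * ∑ p ∈ range (k + 1) ×ˢ range (k + 1),
        (linCoeff k p.1 p.2 : R) * (u ^ p.1 * v ^ p.2) := by
  have hsign : ((-1 : R) ^ k) * (-1) ^ k = 1 := by rw [← mul_pow]; simp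
  rw [one_sub_C_mul_one_add_X_pow, one_sub_C_mul_one_add_X_pow, sum_mul_sum, ← sum_product',
    finsetSum_coeff, mul_sum]
  refine sum_congr rfl fun p _ => ?_
  rw [mul_mul_mul_comm, ← C_mul, ← pow_add, coeff_C_mul, coeff_one_add_X_pow, linCoeff]
  push_cast
  linear_combination (-(-1 : R) ^ (p.1 + p.2) * u ^ p.1 * v ^ p.2 * k.choose p.1
    * k.choose p.2 * (p.1 + p.2).choose k) * hsign

lemma one_sub_C_mul_one_add_X_mul {u v : R} (huv : u + v = 2 * u * v) :
    (1 - C u * (1 + X)) * (1 - C v * (1 + X)) =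
      expand R 2 (C (u * v) * X + C (1 - u * v)) := by
  have h := congrArg C huv
  simp only [map_add, map_mul, map_sub, map_one, map_ofNat, expand_C, expand_X] at h ⊢
  linear_combination -(1 + X) * h

lemma coeff_C_mul_X_add_C_pow (p q : R) (k n : ℕ) :
    ((C p * X + C q) ^ k).coeff n = q ^ (k - n) * k.choose n * p ^ n := by
  rw [← coeff_X_add_C_pow, ← comp_C_mul_X_coeff]
  simp

theorem sum_linCoeff_two_mul_mul_pow {u v : R} (huv : u + v = 2 * u * v) (n : ℕ) :
    ∑ p ∈ range (2 * n + 1) ×ˢ range (2 * n + 1),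
        (linCoeff (2 * n) p.1 p.2 : R) * (u ^ p.1 * v ^ p.2) =
      n.centralBinom * (u * v * (1 - u * v)) ^ n := by
  have h := coeff_one_sub_C_mul_one_add_X_pow_mul u v (2 * n)
  rw [(even_two_mul n).neg_one_pow, one_mul, ← mul_pow, one_sub_C_mul_one_add_X_mul huv,
    ← map_pow, coeff_expand_mul' two_pos, coeff_C_mul_X_add_C_pow] at h
  rw [← h, Nat.centralBinom, mul_pow (u * v), two_mul, Nat.add_sub_cancel]
  ring

theorem sum_linCoeff_two_mul_add_one_mul_pow {u v : R} (huv : u + v = 2 * u * v) (n : ℕ) :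
    ∑ p ∈ range (2 * n + 1 + 1) ×ˢ range (2 * n + 1 + 1),
      (linCoeff (2 * n + 1) p.1 p.2 : R) * (u ^ p.1 * v ^ p.2) = 0 := by
  have h := coeff_one_sub_C_mul_one_add_X_pow_mul u v (2 * n + 1)
  rw [(odd_two_mul_add_one n).neg_one_pow, ← mul_pow, one_sub_C_mul_one_add_X_mul huv,
    ← map_pow, coeff_expand two_pos, if_neg (by omega)] at h
  linear_combination h

end GeneratingPolynomial

/-! ### Convergence -/

lemma one_le_radius_ordinaryHypergeometricSeries {𝕂 : Type*} (𝔸 : Type*) [RCLike 𝕂]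
    [NormedDivisionRing 𝔸] [NormedAlgebra 𝕂 𝔸] (a b c : 𝕂) :
    1 ≤ (ordinaryHypergeometricSeries 𝔸 a b c).radius := by
  by_cases h : ∀ k : ℕ, (k : 𝕂) ≠ -a ∧ (k : 𝕂) ≠ -b ∧ (k : 𝕂) ≠ -c
  · exact (ordinaryHypergeometricSeries_radius_eq_one 𝔸 a b c h).ge
  · push Not at h
    obtain ⟨k, hk⟩ := h
    have hzero (n : ℕ) : ordinaryHypergeometricSeries 𝔸 a b c (n + (k + 1)) = 0 :=
      ordinaryHypergeometricSeries_eq_zero_of_neg_nat (k := k) a b c (by tauto) (by omega)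
    rw [FormalMultilinearSeries.radius_eq_top_of_forall_image_add_eq_zero _ (k + 1) hzero]
    exact le_top

lemma differentiableOn_ordinaryHypergeometric {𝕂 : Type*} [RCLike 𝕂] (a b c : 𝕂) :
    DifferentiableOn 𝕂 (₂F₁ a b c : 𝕂 → 𝕂) (ball 0 1) := by
  have hradius := one_le_radius_ordinaryHypergeometricSeries 𝕂 a b c
  rw [← eball_ofReal, ENNReal.ofReal_one]
  exact (FormalMultilinearSeries.hasFPowerSeriesOnBall _ (one_pos.trans_le hradius))
    |>.differentiableOn.mono (eball_subset_eball hradius)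

lemma ordinaryHypergeometric_eq_tsum_legendreCoeff (a x : ℂ) :
    ₂F₁ a (1 - a) 1 x = ∑' n, legendreCoeff a n * x ^ n :=
  congrFun (ordinaryHypergeometric_eq_tsum a (1 - a) 1) x

lemma summable_norm_legendreCoeff_mul_pow (a : ℂ) {x : ℂ} (hx : ‖x‖ < 1) :
    Summable fun n => ‖legendreCoeff a n * x ^ n‖ := by
  have hmem : x ∈ eball 0 (ordinaryHypergeometricSeries ℂ a (1 - a) 1).radius := by
    refine eball_subset_eball (one_le_radius_ordinaryHypergeometricSeries ℂ a (1 - a) 1) ?_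
    rwa [← ENNReal.ofReal_one, eball_ofReal, mem_ball_zero_iff]
  simpa only [ordinaryHypergeometricSeries_apply_eq, smul_eq_mul] using!
    (ordinaryHypergeometricSeries ℂ a (1 - a) 1).summable_norm_apply hmem

lemma norm_centralBinom_div_four_pow_le_one (n : ℕ) : ‖(n.centralBinom / 4 ^ n : ℂ)‖ ≤ 1 := by
  rw [norm_div, norm_pow, Complex.norm_natCast, Complex.norm_ofNat]
  exact div_le_one_of_le₀ (by exact_mod_cast n.centralBinom_le_four_pow) (by positivity)

/-- The generalized hypergeometric series `₄F₃(a₁, a₂, a₃, a₄; b₁, b₂, b₃; x)`, with junk value `0`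
where it diverges. -/
noncomputable def fourF3 (a₁ a₂ a₃ a₄ b₁ b₂ b₃ x : ℂ) : ℂ :=
  ∑' n, fourF3Coeff a₁ a₂ a₃ a₄ b₁ b₂ b₃ n * x ^ n

lemma summable_norm_fourF3Coeff_mul_pow (a : ℂ) {x : ℂ} (hx : ‖x‖ < 1) :
    Summable fun n => ‖fourF3Coeff (a / 2) ((1 - a) / 2) ((a + 1) / 2) (1 - a / 2) (1 / 2) 1 1 n
      * x ^ n‖ := by
  obtain ⟨y, rfl⟩ := IsAlgClosed.exists_pow_nat_eq x two_pos
  have hy : ‖y‖ < 1 := by simpa using hx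
  refine .of_nonneg_of_le (fun _ => norm_nonneg _) (fun n => ?_)
    ((summable_norm_legendreCoeff_mul_pow a hy).comp_injective (mul_right_injective₀ two_ne_zero))
  rw [fourF3Coeff_eq_legendreCoeff_mul_centralBinom, ← pow_mul, mul_right_comm, norm_mul]
  exact mul_le_of_le_one_right (norm_nonneg _) (norm_centralBinom_div_four_pow_le_one n)

lemma differentiableOn_tsum_mul_pow {c : ℕ → ℂ}
    (hc : ∀ x : ℂ, ‖x‖ < 1 → Summable fun n => ‖c n * x ^ n‖) :
    DifferentiableOn ℂ (fun x => ∑' n, c n * x ^ n) (ball 0 1) := by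
  intro x hx
  obtain ⟨r, hxr, hr⟩ := exists_between (mem_ball_zero_iff.1 hx)
  have hr_norm : ‖(r : ℂ)‖ = r := Complex.norm_of_nonneg ((norm_nonneg x).trans hxr.le)
  have hdiff : DifferentiableOn ℂ (fun x => ∑' n, c n * x ^ n) (ball 0 r) := by
    refine Complex.differentiableOn_tsum_of_summable_norm (hc r (by rwa [hr_norm]))
      (fun n => by fun_prop) isOpen_ball fun n w hw => ?_
    rw [norm_mul, norm_mul, norm_pow, norm_pow, hr_norm]
    gcongr
    exact (mem_ball_zero_iff.1 hw).le
  exact (hdiff.differentiableAt (isOpen_ball.mem_nhds (mem_ball_zero_iff.2 hxr)))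
    |>.differentiableWithinAt

lemma differentiableOn_fourF3 (a : ℂ) :
    DifferentiableOn ℂ (fourF3 (a / 2) ((1 - a) / 2) ((a + 1) / 2) (1 - a / 2) (1 / 2) 1 1)
      (ball 0 1) :=
  differentiableOn_tsum_mul_pow fun _ => summable_norm_fourF3Coeff_mul_pow a

/-! ### The product formula near the origin -/

lemma choose_mul_pow_le (n k t : ℕ) : n.choose k * t ^ k ≤ (t + 1) ^ n := by
  rcases le_or_gt k n with h | h
  · rw [add_pow]
    simpa [mul_comm] using single_le_sum (f := fun m => t ^ m * 1 ^ (n - m) * n.choose m)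
      (fun _ _ => Nat.zero_le _) (mem_range_succ_iff.2 h)
  · simp [Nat.choose_eq_zero_of_lt h]

/- Comparing with `(1 + 8) ^ (i + j)` gains `8⁻ᵏ`, which beats the `4 ^ k` of the other two binomial
coefficients; the price is that `‖u‖` and `‖v‖` have to be less than `1 / 9` below. -/
lemma abs_linCoeff_le (k i j : ℕ) : |(linCoeff k i j : ℝ)| ≤ (1 / 2) ^ k * (9 ^ i * 9 ^ j) := by
  have hi : (k.choose i : ℝ) ≤ 2 ^ k := by exact_mod_cast Nat.choose_le_two_pow k i
  have hj : (k.choose j : ℝ) ≤ 2 ^ k := by exact_mod_cast Nat.choose_le_two_pow k j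
  have hk : ((i + j).choose k : ℝ) * 8 ^ k ≤ 9 ^ (i + j) := by
    exact_mod_cast choose_mul_pow_le (i + j) k 8
  calc |(linCoeff k i j : ℝ)| = k.choose i * k.choose j * (i + j).choose k := by
        simp [linCoeff, abs_mul]
    _ ≤ 2 ^ k * 2 ^ k * (9 ^ (i + j) / 8 ^ k) := by
        gcongr
        rwa [le_div_iff₀ (by positivity)]
    _ = (1 / 2) ^ k * (9 ^ i * 9 ^ j) := by
        rw [← mul_pow, mul_div_left_comm, ← div_pow, pow_add]
        norm_num [mul_comm]

section SmallArguments

variable (a : ℂ) {u v : ℂ}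

lemma summable_legendreCoeff_mul_linCoeff_mul_pow (hu : ‖u‖ < 1 / 9) (hv : ‖v‖ < 1 / 9) :
    Summable fun q : ℕ × ℕ × ℕ =>
      legendreCoeff a q.1 * (linCoeff q.1 q.2.1 q.2.2 * (u ^ q.2.1 * v ^ q.2.2)) := by
  have hcoeff := summable_norm_legendreCoeff_mul_pow a (x := 1 / 2) (by norm_num)
  have hgeom {w : ℂ} (hw : ‖w‖ < 1 / 9) : Summable fun n : ℕ => (9 * ‖w‖) ^ n :=
    summable_geometric_of_lt_one (by positivity) (by linarith)
  have hmajorant := hcoeff.mul_of_nonneg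
    ((hgeom hu).mul_of_nonneg (hgeom hv) (fun _ => by positivity) fun _ => by positivity)
    (fun _ => norm_nonneg _) fun _ => mul_nonneg (by positivity) (by positivity)
  refine .of_norm_bounded hmajorant fun ⟨k, i, j⟩ => ?_
  calc ‖legendreCoeff a k * (linCoeff k i j * (u ^ i * v ^ j))‖
      = ‖legendreCoeff a k‖ * (|(linCoeff k i j : ℝ)| * (‖u‖ ^ i * ‖v‖ ^ j)) := by
        simp only [norm_mul, norm_pow, Complex.norm_intCast]
    _ ≤ ‖legendreCoeff a k‖ * ((1 / 2) ^ k * (9 ^ i * 9 ^ j) * (‖u‖ ^ i * ‖v‖ ^ j)) := by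
        gcongr
        exact abs_linCoeff_le k i j
    _ = ‖legendreCoeff a k * (1 / 2) ^ k‖ * ((9 * ‖u‖) ^ i * (9 * ‖v‖) ^ j) := by
        rw [norm_mul, norm_pow, mul_pow, mul_pow]
        norm_num
        ring

lemma tsum_legendreCoeff_mul_linCoeff_mul_pow (i j : ℕ) :
    ∑' k, legendreCoeff a k * (linCoeff k i j * (u ^ i * v ^ j)) =
      legendreCoeff a i * u ^ i * (legendreCoeff a j * v ^ j) := by
  rw [tsum_eq_sum (s := range (i + j + 1))]
  · simp only [← mul_assoc]
    rw [← sum_mul, ← sum_mul, sum_legendreCoeff_mul_linCoeff]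
    ring
  · intro k hk
    simp [linCoeff_eq_zero_of_add_lt (not_lt.1 (mt mem_range.2 hk))]

lemma tsum_linCoeff_mul_pow (k : ℕ) :
    ∑' p : ℕ × ℕ, (linCoeff k p.1 p.2 : ℂ) * (u ^ p.1 * v ^ p.2) =
      ∑ p ∈ range (k + 1) ×ˢ range (k + 1), (linCoeff k p.1 p.2 : ℂ) * (u ^ p.1 * v ^ p.2) := by
  refine tsum_eq_sum fun p hp => ?_
  have hlt : k < p.1 ∨ k < p.2 := by
    simp only [mem_product, mem_range] at hp
    omega
  rcases hlt with h | h
  · simp [linCoeff_eq_zero_of_lt_left p.2 h]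
  · simp [linCoeff_eq_zero_of_lt_right p.1 h]

lemma ordinaryHypergeometric_mul_of_norm_lt (hu : ‖u‖ < 1 / 9) (hv : ‖v‖ < 1 / 9)
    (huv : u + v = 2 * u * v) :
    ₂F₁ a (1 - a) 1 u * ₂F₁ a (1 - a) 1 v =
      fourF3 (a / 2) ((1 - a) / 2) ((a + 1) / 2) (1 - a / 2) (1 / 2) 1 1
        (4 * (u * v * (1 - u * v))) := by
  have hsum := summable_legendreCoeff_mul_linCoeff_mul_pow a hu hv
  rw [ordinaryHypergeometric_eq_tsum_legendreCoeff, ordinaryHypergeometric_eq_tsum_legendreCoeff,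
    tsum_mul_tsum_of_summable_norm
      (summable_norm_legendreCoeff_mul_pow a (hu.trans (by norm_num)))
      (summable_norm_legendreCoeff_mul_pow a (hv.trans (by norm_num)))]
  simp_rw [← tsum_legendreCoeff_mul_linCoeff_mul_pow]
  rw [hsum.tsum_comm (f := fun k (p : ℕ × ℕ) =>
    legendreCoeff a k * (linCoeff k p.1 p.2 * (u ^ p.1 * v ^ p.2)))]
  simp_rw [tsum_mul_left, tsum_linCoeff_mul_pow]
  rw [← (mul_right_injective₀ (two_ne_zero' ℕ)).tsum_eq, fourF3]
  · refine tsum_congr fun n => ?_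
    rw [sum_linCoeff_two_mul_mul_pow huv, fourF3Coeff_eq_legendreCoeff_mul_centralBinom,
      mul_pow 4]
    field_simp
  · intro k hk
    by_contra hodd
    obtain ⟨n, rfl | rfl⟩ := k.even_or_odd'
    · exact hodd ⟨n, rfl⟩
    · exact hk (mul_eq_zero_of_right _ (sum_linCoeff_two_mul_add_one_mul_pow huv n))

end SmallArguments

/-! ### Analytic continuation of the product formula -/

/-- The function `√(1 - s²) + i s`, which is `exp (i φ)` in terms of `s = sin φ`. Its reciprocal is
its value at `-s`. -/
noncomputable def expIArcsin (s : ℂ) : ℂ := (1 - s ^ 2) ^ (2⁻¹ : ℂ) + Complex.I * s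

lemma expIArcsin_mul_expIArcsin_neg (s : ℂ) : expIArcsin s * expIArcsin (-s) = 1 := by
  have hsqrt : ((1 - s ^ 2) ^ (2⁻¹ : ℂ)) ^ 2 = 1 - s ^ 2 := Complex.cpow_ofNat_inv_pow _ 2
  rw [expIArcsin, expIArcsin, neg_sq]
  linear_combination hsqrt - s ^ 2 * Complex.I_sq

lemma expIArcsin_neg (s : ℂ) : expIArcsin (-s) = (expIArcsin s)⁻¹ :=
  eq_inv_of_mul_eq_one_right (expIArcsin_mul_expIArcsin_neg s)

lemma expIArcsin_sub_inv (s : ℂ) : expIArcsin s - (expIArcsin s)⁻¹ = 2 * Complex.I * s := by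
  rw [← expIArcsin_neg, expIArcsin, expIArcsin, neg_sq]
  ring

lemma expIArcsin_add_inv (s : ℂ) :
    expIArcsin s + (expIArcsin s)⁻¹ = 2 * (1 - s ^ 2) ^ (2⁻¹ : ℂ) := by
  rw [← expIArcsin_neg, expIArcsin, expIArcsin, neg_sq]
  ring

lemma norm_sq_lt_one {s : ℂ} (hs : ‖s‖ < 1) : ‖s ^ 2‖ < 1 := by
  rw [norm_pow]
  exact pow_lt_one₀ (norm_nonneg s) hs two_ne_zero

lemma four_mul_one_sub_expIArcsin_div_two_mul (s : ℂ) :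
    4 * ((1 - expIArcsin (-s)) / 2 * ((1 - expIArcsin s) / 2) *
      (1 - (1 - expIArcsin (-s)) / 2 * ((1 - expIArcsin s) / 2))) = s ^ 2 := by
  have hmul := expIArcsin_mul_expIArcsin_neg s
  have hadd := expIArcsin_add_inv s
  have hsqrt : ((1 - s ^ 2) ^ (2⁻¹ : ℂ)) ^ 2 = 1 - s ^ 2 := Complex.cpow_ofNat_inv_pow _ 2
  have hprod : (1 - expIArcsin (-s)) / 2 * ((1 - expIArcsin s) / 2) =
      (1 - (1 - s ^ 2) ^ (2⁻¹ : ℂ)) / 2 := by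
    rw [← expIArcsin_neg] at hadd
    linear_combination hmul / 4 - hadd / 4
  rw [hprod]
  linear_combination -hsqrt

lemma one_sub_sq_re_pos {s : ℂ} (hs : ‖s‖ < 1) : 0 < (1 - s ^ 2).re := by
  rw [Complex.sub_re, Complex.one_re, sub_pos]
  exact (Complex.re_le_norm _).trans_lt (norm_sq_lt_one hs)

lemma re_add_inv_pos_iff {w : ℂ} : 0 < (w + w⁻¹).re ↔ 0 < w.re := by
  have hre : (w + w⁻¹).re = w.re * (1 + (Complex.normSq w)⁻¹) := by
    rw [Complex.add_re, Complex.inv_re]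
    ring
  have hpos : 0 < 1 + (Complex.normSq w)⁻¹ :=
    add_pos_of_pos_of_nonneg one_pos (inv_nonneg.2 (Complex.normSq_nonneg w))
  rw [hre, mul_pos_iff_of_pos_right hpos]

lemma expIArcsin_re_pos {s : ℂ} (hs : ‖s‖ < 1) : 0 < (expIArcsin s).re := by
  have hre := one_sub_sq_re_pos hs
  rw [← re_add_inv_pos_iff, expIArcsin_add_inv, two_mul, Complex.add_re, Complex.cpow_inv_two_re]
  positivity

lemma norm_one_sub_lt_two {w : ℂ} (hw : 0 < w.re) (h : ‖w - w⁻¹‖ < 2) : ‖1 - w‖ < 2 := by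
  have hw0 : w ≠ 0 := by rintro rfl; exact lt_irrefl _ hw
  have hadd : ‖w‖ < ‖w + 1‖ := by
    refine lt_of_pow_lt_pow_left₀ 2 (norm_nonneg _) ?_
    rw [← Complex.normSq_eq_norm_sq, ← Complex.normSq_eq_norm_sq, Complex.normSq_add]
    norm_num
    linarith
  have hfactor : ‖1 - w‖ * ‖w + 1‖ = ‖w - w⁻¹‖ * ‖w‖ := by
    rw [← norm_mul, ← norm_mul, ← norm_neg]
    congr 1
    field_simp
    ring
  by_contra! hge
  have : 2 * ‖w‖ < ‖1 - w‖ * ‖w + 1‖ :=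
    mul_lt_mul' hge hadd (norm_nonneg w) (two_pos.trans_le hge)
  nlinarith [norm_nonneg w]

lemma norm_one_sub_div_two_lt_one {w : ℂ} (hw : 0 < w.re) (h : ‖w - w⁻¹‖ < 2) :
    ‖(1 - w) / 2‖ < 1 := by
  rw [norm_div, Complex.norm_ofNat, div_lt_one two_pos]
  exact norm_one_sub_lt_two hw h

lemma norm_one_sub_expIArcsin_div_two_lt_one {s : ℂ} (hs : ‖s‖ < 1) :
    ‖(1 - expIArcsin s) / 2‖ < 1 := by
  refine norm_one_sub_div_two_lt_one (expIArcsin_re_pos hs) ?_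
  rw [expIArcsin_sub_inv, norm_mul, norm_mul, Complex.norm_I, Complex.norm_ofNat]
  linarith

lemma differentiableOn_expIArcsin : DifferentiableOn ℂ expIArcsin (ball 0 1) := by
  refine DifferentiableOn.add (DifferentiableOn.cpow_const (by fun_prop) fun s hs => ?_)
    (by fun_prop)
  exact .inl (one_sub_sq_re_pos (mem_ball_zero_iff.1 hs))

lemma differentiableOn_ordinaryHypergeometric_expIArcsin (a : ℂ) :
    DifferentiableOn ℂ (fun s => ₂F₁ a (1 - a) 1 ((1 - expIArcsin s) / 2)) (ball 0 1) :=
  (differentiableOn_ordinaryHypergeometric a (1 - a) 1).comp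
    ((differentiableOn_expIArcsin.const_sub 1).div_const 2)
    fun _ hs => mem_ball_zero_iff.2
      (norm_one_sub_expIArcsin_div_two_lt_one (mem_ball_zero_iff.1 hs))

lemma eventually_ordinaryHypergeometric_mul_expIArcsin (a : ℂ) :
    ∀ᶠ s in nhds 0, ₂F₁ a (1 - a) 1 ((1 - expIArcsin (-s)) / 2) *
        ₂F₁ a (1 - a) 1 ((1 - expIArcsin s) / 2) =
      fourF3 (a / 2) ((1 - a) / 2) ((a + 1) / 2) (1 - a / 2) (1 / 2) 1 1 (s ^ 2) := by
  have hcont : ContinuousAt (fun s => (1 - expIArcsin s) / 2) 0 :=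
    ((differentiableOn_expIArcsin.const_sub 1).div_const 2).continuousOn.continuousAt
      (ball_mem_nhds 0 one_pos)
  have hsmall : ∀ᶠ s in nhds 0, ‖(1 - expIArcsin s) / 2‖ < 1 / 9 :=
    hcont.norm.eventually_lt continuousAt_const (by simp [expIArcsin])
  have hsmall_neg : ∀ᶠ s in nhds 0, ‖(1 - expIArcsin (-s)) / 2‖ < 1 / 9 :=
    (continuous_neg.tendsto' (0 : ℂ) 0 neg_zero).eventually hsmall
  filter_upwards [hsmall, hsmall_neg] with s hs hs_neg
  have hmul := expIArcsin_mul_expIArcsin_neg s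
  rw [ordinaryHypergeometric_mul_of_norm_lt a hs_neg hs (by linear_combination -hmul / 2),
    four_mul_one_sub_expIArcsin_div_two_mul]

theorem ordinaryHypergeometric_mul_expIArcsin (a : ℂ) {s : ℂ} (hs : ‖s‖ < 1) :
    ₂F₁ a (1 - a) 1 ((1 - expIArcsin (-s)) / 2) * ₂F₁ a (1 - a) 1 ((1 - expIArcsin s) / 2) =
      fourF3 (a / 2) ((1 - a) / 2) ((a + 1) / 2) (1 - a / 2) (1 / 2) 1 1 (s ^ 2) := by
  have hF := differentiableOn_ordinaryHypergeometric_expIArcsin a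
  have hneg := hF.comp differentiable_neg.differentiableOn
    fun s (hs : s ∈ ball (0 : ℂ) 1) => by simpa using hs
  have hsq := (differentiableOn_fourF3 a).comp (differentiable_pow 2).differentiableOn
    fun s (hs : s ∈ ball (0 : ℂ) 1) =>
      mem_ball_zero_iff.2 (norm_sq_lt_one (mem_ball_zero_iff.1 hs))
  exact ((hneg.mul hF).analyticOnNhd isOpen_ball).eqOn_of_preconnected_of_eventuallyEq
    (hsq.analyticOnNhd isOpen_ball) (convex_ball 0 1).isPreconnected (mem_ball_self one_pos)
    (eventually_ordinaryHypergeometric_mul_expIArcsin a) (mem_ball_zero_iff.2 hs)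

lemma expIArcsin_of_re_pos {w : ℂ} (hw : 0 < w.re) :
    expIArcsin ((w - w⁻¹) / (2 * Complex.I)) = w := by
  have hw0 : w ≠ 0 := by rintro rfl; exact lt_irrefl _ hw
  have hre : 0 < ((w + w⁻¹) / 2).re := by
    rw [Complex.div_ofNat_re]
    exact half_pos (re_add_inv_pos_iff.2 hw)
  have hsq : 1 - ((w - w⁻¹) / (2 * Complex.I)) ^ 2 = ((w + w⁻¹) / 2) ^ 2 := by
    rw [div_pow, mul_pow, Complex.I_sq]
    field_simp
    ring
  rw [expIArcsin, hsq, Complex.sq_cpow_two_inv hre]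
  field_simp
  ring

theorem ordinaryHypergeometric_mul_of_re_pos (a : ℂ) {w : ℂ} (hw : 0 < w.re)
    (hlt : ‖w - w⁻¹‖ < 2) :
    ₂F₁ a (1 - a) 1 ((1 - w⁻¹) / 2) * ₂F₁ a (1 - a) 1 ((1 - w) / 2) =
      fourF3 (a / 2) ((1 - a) / 2) ((a + 1) / 2) (1 - a / 2) (1 / 2) 1 1
        (-((w - w⁻¹) / 2) ^ 2) := by
  have hnorm : ‖(w - w⁻¹) / (2 * Complex.I)‖ < 1 := by
    rw [norm_div, norm_mul, Complex.norm_I, Complex.norm_ofNat, mul_one]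
    exact (div_lt_one two_pos).2 hlt
  have h := ordinaryHypergeometric_mul_expIArcsin a hnorm
  rw [expIArcsin_neg, expIArcsin_of_re_pos hw] at h
  rw [h, ← div_div, div_pow _ Complex.I, Complex.I_sq, div_neg, div_one]

/-! ### The complete elliptic integral -/

lemma hasSum_one_sub_cpow_neg (a : ℂ) {x : ℂ} (hx : ‖x‖ < 1) :
    HasSum (fun n : ℕ => (ascPochhammer ℂ n).eval a / n.factorial * x ^ n) ((1 - x) ^ (-a)) := by
  have hmem : x ∈ eball (0 : ℂ) 1 := by
    rwa [← ENNReal.ofReal_one, eball_ofReal, mem_ball_zero_iff]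
  have h := (Complex.one_div_one_sub_cpow_hasFPowerSeriesOnBall_zero a).hasSum hmem
  rw [zero_add, one_div, ← Complex.cpow_neg] at h
  convert! h using 2 with n
  have hfac : (n.factorial : ℂ) ≠ 0 := by exact_mod_cast n.factorial_ne_zero
  have hchoose := Ring.factorial_nsmul_multichoose_eq_ascPochhammer a n
  rw [Polynomial.ascPochhammer_smeval_eq_eval, nsmul_eq_mul, Ring.multichoose_eq] at hchoose
  rw [← hchoose, mul_div_cancel_left₀ _ hfac, FormalMultilinearSeries.ofScalars_apply_eq,
    smul_eq_mul]

lemma prod_range_two_mul_add_one_div (n : ℕ) :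
    ∏ i ∈ range n, ((2 * i + 1) / (2 * i + 2) : ℝ) =
      (ascPochhammer ℝ n).eval (1 / 2) / n.factorial := by
  induction n with
  | zero => simp
  | succ n ih =>
    rw [prod_range_succ, ih, ascPochhammer_succ_eval, Nat.factorial_succ]
    push_cast
    field_simp
    ring

lemma integral_sin_pow_two_mul (n : ℕ) :
    ∫ θ in 0..Real.pi / 2, Real.sin θ ^ (2 * n) =
      Real.pi / 2 * ((ascPochhammer ℝ n).eval (1 / 2) / n.factorial) := by
  have hreflect := intervalIntegral.integral_comp_sub_left
    (fun θ => Real.cos θ ^ (2 * n)) (a := 0) (b := Real.pi / 2) (Real.pi / 2)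
  simp only [Real.cos_pi_div_two_sub, sub_self, sub_zero] at hreflect
  rw [hreflect, EulerSine.integral_cos_pow_eq, integral_sin_pow_even,
    prod_range_two_mul_add_one_div]
  ring

lemma ofReal_ascPochhammer_eval (a : ℝ) (n : ℕ) :
    (((ascPochhammer ℝ n).eval a : ℝ) : ℂ) = (ascPochhammer ℂ n).eval (a : ℂ) := by
  simp [ascPochhammer_eval_eq_prod_range]

lemma ellK_eq_ordinaryHypergeometric {m : ℂ} (hm : ‖m‖ < 1) :
    ellK m = Real.pi / 2 * ₂F₁ (1 / 2 : ℂ) (1 / 2) 1 m := by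
  have hsin (θ : ℝ) : ‖m * (Real.sin θ : ℂ) ^ 2‖ ≤ ‖m‖ := by
    rw [norm_mul, norm_pow, Complex.norm_real]
    exact mul_le_of_le_one_right (norm_nonneg _)
      (pow_le_one₀ (norm_nonneg _) (Real.abs_sin_le_one θ))
  have hint := intervalIntegral.hasSum_integral_of_dominated_convergence
    (a := 0) (b := Real.pi / 2) (μ := MeasureTheory.volume)
    (fun (n : ℕ) _ => ‖(ascPochhammer ℂ n).eval (1 / 2) / n.factorial * m ^ n‖)
    (fun n => Continuous.aestronglyMeasurable (by fun_prop))
    (fun n => .of_forall fun θ _ => by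
      rw [norm_mul, norm_mul, norm_pow, norm_pow]
      gcongr
      exact hsin θ)
    (.of_forall fun _ _ => (hasSum_one_sub_cpow_neg (1 / 2) hm).summable.norm)
    intervalIntegrable_const
    (.of_forall fun θ _ => hasSum_one_sub_cpow_neg (1 / 2) ((hsin θ).trans_lt hm))
  rw [ellK, ← hint.tsum_eq, ordinaryHypergeometric_eq_tsum, ← tsum_mul_left]
  refine tsum_congr fun n => ?_
  have hwallis := congrArg Complex.ofReal (integral_sin_pow_two_mul n)
  rw [← intervalIntegral.integral_ofReal] at hwallis
  simp only [mul_pow, ← pow_mul, intervalIntegral.integral_const_mul]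
  simp only [Complex.ofReal_mul, Complex.ofReal_div, Complex.ofReal_pow, Complex.ofReal_natCast,
    ofReal_ascPochhammer_eval] at hwallis
  rw [hwallis, ascPochhammer_eval_one, smul_eq_mul]
  push_cast
  ring

/-! ### The parameters of the elliptic integrals -/

section LegendreArgument

variable (z : ℂ)

/-- The argument `w = √(1 - 2z - 2√(z² - z))` of the Legendre functions in the factorization
`₄F₃(z) = P₋ₐ(w⁻¹) P₋ₐ(w)`; for `z = sin² φ` it is `exp (i φ)` or `exp (-i φ)`. -/
noncomputable def legendreArg : ℂ := (1 - 2 * z - 2 * (z ^ 2 - z) ^ (1 / 2 : ℂ)) ^ (1 / 2 : ℂ)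

lemma cpow_half_sq (x : ℂ) : (x ^ (1 / 2 : ℂ)) ^ 2 = x := by
  rw [one_div]
  exact Complex.cpow_ofNat_inv_pow x 2

lemma legendreArg_sq_mul :
    legendreArg z ^ 2 * (1 - 2 * z + 2 * (z ^ 2 - z) ^ (1 / 2 : ℂ)) = 1 := by
  rw [legendreArg, cpow_half_sq]
  linear_combination -4 * cpow_half_sq (z ^ 2 - z)

lemma legendreArg_ne_zero : legendreArg z ≠ 0 := by
  intro h
  simpa [h] using legendreArg_sq_mul z

lemma legendreArg_sub_inv_sq : (legendreArg z - (legendreArg z)⁻¹) ^ 2 = -4 * z := by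
  have hinv : ((legendreArg z)⁻¹) ^ 2 = 1 - 2 * z + 2 * (z ^ 2 - z) ^ (1 / 2 : ℂ) := by
    rw [inv_pow]
    exact inv_eq_of_mul_eq_one_right (legendreArg_sq_mul z)
  have hsq : legendreArg z ^ 2 = 1 - 2 * z - 2 * (z ^ 2 - z) ^ (1 / 2 : ℂ) := cpow_half_sq _
  linear_combination hsq + hinv - 2 * mul_inv_cancel₀ (legendreArg_ne_zero z)

variable {z}

lemma legendreArg_re_pos (hz : ‖z‖ < 1) : 0 < (legendreArg z).re := by
  have hnonneg : 0 ≤ (legendreArg z).re := by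
    rw [legendreArg, one_div, Complex.cpow_inv_two_re]
    positivity
  refine hnonneg.lt_of_ne' fun hre => ?_
  have hadd : (legendreArg z + (legendreArg z)⁻¹) ^ 2 = 4 * (1 - z) := by
    linear_combination legendreArg_sub_inv_sq z + 4 * mul_inv_cancel₀ (legendreArg_ne_zero z)
  have hre_add : (legendreArg z + (legendreArg z)⁻¹).re = 0 := by simp [Complex.inv_re, hre]
  have hre_z : z.re < 1 := (Complex.re_le_norm z).trans_lt hz
  have hsq := congrArg Complex.re hadd
  rw [sq, Complex.mul_re, hre_add, Complex.mul_re, Complex.re_ofNat, Complex.im_ofNat,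
    Complex.sub_re, Complex.one_re] at hsq
  nlinarith [mul_self_nonneg (legendreArg z + (legendreArg z)⁻¹).im]

lemma norm_legendreArg_sub_inv_lt_two (hz : ‖z‖ < 1) :
    ‖legendreArg z - (legendreArg z)⁻¹‖ < 2 := by
  refine lt_of_pow_lt_pow_left₀ 2 two_pos.le ?_
  rw [← norm_pow, legendreArg_sub_inv_sq, norm_mul, norm_neg, Complex.norm_ofNat]
  linarith

lemma norm_one_sub_legendreArg_div_two_lt_one (hz : ‖z‖ < 1) : ‖(1 - legendreArg z) / 2‖ < 1 :=
  norm_one_sub_div_two_lt_one (legendreArg_re_pos hz) (norm_legendreArg_sub_inv_lt_two hz)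

lemma norm_one_sub_inv_legendreArg_div_two_lt_one (hz : ‖z‖ < 1) :
    ‖(1 - (legendreArg z)⁻¹) / 2‖ < 1 := by
  refine norm_one_sub_div_two_lt_one ?_ ?_
  · rw [Complex.inv_re]
    exact div_pos (legendreArg_re_pos hz) (Complex.normSq_pos.2 (legendreArg_ne_zero z))
  · rw [inv_inv, norm_sub_rev]
    exact norm_legendreArg_sub_inv_lt_two hz

theorem ordinaryHypergeometric_mul_legendreArg (a : ℂ) (hz : ‖z‖ < 1) :
    ₂F₁ a (1 - a) 1 ((1 - (legendreArg z)⁻¹) / 2) * ₂F₁ a (1 - a) 1 ((1 - legendreArg z) / 2) =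
      fourF3 (a / 2) ((1 - a) / 2) ((a + 1) / 2) (1 - a / 2) (1 / 2) 1 1 z := by
  rw [ordinaryHypergeometric_mul_of_re_pos a (legendreArg_re_pos hz)
    (norm_legendreArg_sub_inv_lt_two hz)]
  congr 1
  linear_combination -legendreArg_sub_inv_sq z / 4

end LegendreArgument

theorem fourF3_elliptic_K_product_general {z : ℂ} (hz : ‖z‖ < 1) :
    fourF3 (1 / 4) (1 / 4) (3 / 4) (3 / 4) (1 / 2) 1 1 z =
      4 / (Real.pi : ℂ) ^ 2 * ellK (1 / 2 - 1 / (2 * legendreArg z))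
        * ellK (1 / 2 - legendreArg z / 2) := by
  have hpi : (Real.pi : ℂ) ≠ 0 := by exact_mod_cast Real.pi_ne_zero
  have hprod := ordinaryHypergeometric_mul_legendreArg (1 / 2) hz
  norm_num only at hprod
  rw [show 1 / 2 - 1 / (2 * legendreArg z) = (1 - (legendreArg z)⁻¹) / 2 by ring,
    show 1 / 2 - legendreArg z / 2 = (1 - legendreArg z) / 2 by ring,
    ellK_eq_ordinaryHypergeometric (norm_one_sub_inv_legendreArg_div_two_lt_one hz),
    ellK_eq_ordinaryHypergeometric (norm_one_sub_legendreArg_div_two_lt_one hz), ← hprod]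
  field_simp
  ring

lemma fourF3_ofReal_eq_tsum_poch (z : ℝ) :
    fourF3 (1 / 4) (1 / 4) (3 / 4) (3 / 4) (1 / 2) 1 1 z =
      (∑' n : ℕ, poch (1 / 4) n ^ 2 * poch (3 / 4) n ^ 2 /
        (poch (1 / 2) n * poch 1 n ^ 2 * n.factorial) * z ^ n : ℝ) := by
  rw [fourF3, Complex.ofReal_tsum]
  refine tsum_congr fun n => ?_
  simp only [fourF3Coeff, poch, ascPochhammer_eval_eq_prod_range]
  push_cast
  ring

theorem fourF3_elliptic_K_product (z : ℝ) (hz0 : 0 < z) (hz1 : z < 1) :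
    ((∑' n : ℕ,
        (poch (1/4) n)^2 * (poch (3/4) n)^2
          / (poch (1/2) n * (poch 1 n)^2 * (Nat.factorial n)) * z ^ n : ℝ) : ℂ) =
      4 / (Real.pi : ℂ)^2
        * ellK (1/2 - 1 / (2 * ((1 - 2*(z:ℂ) - 2*((z:ℂ)^2 - z) ^ ((1/2 : ℂ))) ^ ((1/2 : ℂ)))))
        * ellK (1/2 - ((1 - 2*(z:ℂ) - 2*((z:ℂ)^2 - z) ^ ((1/2 : ℂ))) ^ ((1/2 : ℂ))) / 2) := by
  rw [← fourF3_ofReal_eq_tsum_poch]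
  exact fourF3_elliptic_K_product_general (by rwa [Complex.norm_of_nonneg hz0.le])
end

section
/- ∑_{n=0}^∞ ((1/2)ₙ)³ (1)ₙ/((3/4)ₙ(5/4)ₙ((3/2)ₙ)²) · (1/16)ⁿ · (1)ₙ/n! = 8·Li₄((√5−1)/2) − (1/2)·Li₄((3−√5)/2) + 4·Li₃((√5−1)/2)·log((√5+1)/2) − 4·Li₃((1−√5)/2)·log((√5+1)/2) − 47π⁴/648 − (3/2)·log⁴((√5+1)/2) + (π²/3)·log²((√5+1)/2). -/
/-- Trilogarithm `Li₃(x) = ∑_{k ≥ 1} x^k / k³`. -/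
noncomputable def Li3 (x : ℝ) : ℝ := ∑' k : ℕ, x ^ (k + 1) / ((k : ℝ) + 1)^3

/-- Tetralogarithm `Li₄(x) = ∑_{k ≥ 1} x^k / k⁴`. -/
noncomputable def Li4 (x : ℝ) : ℝ := ∑' k : ℕ, x ^ (k + 1) / ((k : ℝ) + 1)^4

/-!
The term of index `n` is `2 / (m ^ 4 * C(2m, m))` with `m = 2n + 1`, so the series is
`S(1) - S(-1)` for the Apéry-like series `S(x) = ∑ x ^ n / (n ^ 4 * C(2n, n))`.

A Markov–WZ pair turns `ζ(4)` into a combination of `S(1)` and `∑ H(n) / (n ^ 2 * C(2n, n))`, where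
`H(n) = ∑_{0 < i < n} 1 / i ^ 2`. The latter sum is found by putting `2 - 2 cos y` for the variable
of its generating function: this makes the differential equation of the series elementary, and the
argument `1` is reached at `y = π / 3`. Hence `S(1) = 17 π ^ 4 / 3240`.

For `S(-1)`, the substitution `2 - 2 cosh t` expresses the series with exponents `2`, `3`, `4` in
turn by polylogarithms at `1 - exp t` and `1 - exp (-t)`, by differentiating both sides and using
Landen's identity. The argument `-1` is reached at `t = 2 log φ`, where these points are `-φ` and
`φ⁻¹`; inversion moves `-φ` to `-φ⁻¹`, and duplication removes `Li₄(-φ⁻¹)`.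
-/

open Filter Set Topology
open Real (goldenRatio goldenConj)

section Calculus

lemma eq_of_hasDerivAt_eq {f g f' : ℝ → ℝ} {a b : ℝ} (hf : ContinuousOn f (uIcc a b))
    (hg : ContinuousOn g (uIcc a b)) (hf' : ∀ x ∈ uIoo a b, HasDerivAt f (f' x) x)
    (hg' : ∀ x ∈ uIoo a b, HasDerivAt g (f' x) x) (hab : f a = g a) : f b = g b := by
  obtain rfl | hne := eq_or_ne a b
  · exact hab
  · have hlt : a ⊓ b < a ⊔ b := inf_lt_sup.2 hne
    obtain ⟨c, -, hc⟩ := exists_hasDerivAt_eq_slope (f - g) (fun _ => 0) hlt (hf.sub hg)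
      fun x hx => by simpa only [sub_self] using (hf' x hx).sub (hg' x hx)
    have hends : (f - g) (a ⊔ b) = (f - g) (a ⊓ b) :=
      sub_eq_zero.1 ((div_eq_zero_iff.1 hc.symm).resolve_right (sub_pos.2 hlt).ne')
    rcases le_total a b with h | h <;>
      simp only [h, sup_of_le_left, sup_of_le_right, inf_of_le_left, inf_of_le_right,
        Pi.sub_apply] at hends <;>
      linarith

lemma eq_of_hasDerivAt_of_hasDerivAt_eq {f g f' g' f'' : ℝ → ℝ} {a b : ℝ}
    (hf : ∀ x ∈ uIcc a b, HasDerivAt f (f' x) x) (hg : ∀ x ∈ uIcc a b, HasDerivAt g (g' x) x)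
    (hf' : ∀ x ∈ uIcc a b, HasDerivAt f' (f'' x) x)
    (hg' : ∀ x ∈ uIcc a b, HasDerivAt g' (f'' x) x)
    (hab : f a = g a) (hab' : f' a = g' a) : f b = g b := by
  have hderiv : ∀ x ∈ uIcc a b, f' x = g' x := fun x hx => by
    have hsub : uIcc a x ⊆ uIcc a b := uIcc_subset_uIcc_left hx
    have hIoo : uIoo a x ⊆ uIcc a b := uIoo_subset_uIcc_self.trans hsub
    exact eq_of_hasDerivAt_eq (fun y hy => (hf' y (hsub hy)).continuousAt.continuousWithinAt)
      (fun y hy => (hg' y (hsub hy)).continuousAt.continuousWithinAt)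
      (fun y hy => hf' y (hIoo hy)) (fun y hy => hg' y (hIoo hy)) hab'
  exact eq_of_hasDerivAt_eq (fun x hx => (hf x hx).continuousAt.continuousWithinAt)
    (fun x hx => (hg x hx).continuousAt.continuousWithinAt)
    (fun x hx => hf x (uIoo_subset_uIcc_self hx))
    (fun x hx => hderiv x (uIoo_subset_uIcc_self hx) ▸ hg x (uIoo_subset_uIcc_self hx)) hab

end Calculus

section PowerSum

/-- The sum of the power series with coefficients `a`. -/
noncomputable def powSum (a : ℕ → ℝ) (x : ℝ) : ℝ := ∑' n : ℕ, a n * x ^ n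

/-- The power series with coefficients `a` has radius of convergence at least `R`. -/
def ConvergesOnBall (a : ℕ → ℝ) (R : ℝ) : Prop :=
  ∀ x : ℝ, |x| < R → Summable fun n : ℕ => a n * x ^ n

/-- The coefficients of the derivative of the power series with coefficients `a`. -/
def derivCoeff (a : ℕ → ℝ) (n : ℕ) : ℝ := (n + 1) * a (n + 1)

variable {a b : ℕ → ℝ} {R x : ℝ}

lemma powSum_zero (a : ℕ → ℝ) : powSum a 0 = a 0 := by
  rw [powSum, tsum_eq_single 0 fun n hn => by simp [hn]]
  simp

lemma hasSum_of_hasSum_succ {f : ℕ → ℝ} {s : ℝ} (hf : HasSum (fun n => f (n + 1)) s)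
    (h0 : f 0 = 0) : HasSum f s := by
  simpa [h0] using (hasSum_nat_add_iff 1).1 hf

lemma powSum_one (a : ℕ → ℝ) : powSum a 1 = ∑' n, a n := by
  simp [powSum]

namespace ConvergesOnBall

lemma hasSum (ha : ConvergesOnBall a R) (hx : |x| < R) :
    HasSum (fun n : ℕ => a n * x ^ n) (powSum a x) :=
  (ha x hx).hasSum

lemma mono (hb : ConvergesOnBall b R) (hab : ∀ n, |a n| ≤ |b n|) : ConvergesOnBall a R := by
  refine fun x hx => Summable.of_norm_bounded (hb x hx).abs fun n => ?_
  rw [Real.norm_eq_abs, abs_mul, abs_mul]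
  exact mul_le_mul_of_nonneg_right (hab n) (abs_nonneg _)

lemma const_mul (ha : ConvergesOnBall a R) (c : ℝ) : ConvergesOnBall (fun n => c * a n) R :=
  fun x hx => by simpa only [mul_assoc] using (ha x hx).mul_left c

lemma deriv (ha : ConvergesOnBall a R) : ConvergesOnBall (derivCoeff a) R := by
  intro x hx
  obtain ⟨r, hxr, hrR⟩ := exists_between hx
  have hr : 0 < r := (abs_nonneg x).trans_lt hxr
  have hbounded : (fun n : ℕ => a (n + 1) * r ^ (n + 1)) =O[atTop] fun _ => (1 : ℝ) :=
    (((summable_nat_add_iff 1).2 (ha r (by rwa [abs_of_pos hr]))).tendsto_atTop_zero).isBigO_one ℝ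
  have hgeom : Summable fun n : ℕ => 1 * (((n : ℝ) + 1) * (x / r) ^ n) := by
    have hlt : ‖x / r‖ < 1 := by
      rwa [Real.norm_eq_abs, abs_div, abs_of_pos hr, div_lt_one hr]
    refine ((summable_pow_mul_geometric_of_norm_lt_one 1 hlt).add
      (summable_geometric_of_norm_lt_one hlt)).congr fun n => by ring
  refine (summable_of_isBigO_nat hgeom (hbounded.mul (Asymptotics.isBigO_refl _ _))).mul_left r⁻¹
    |>.congr fun n => ?_
  rw [derivCoeff, div_pow, pow_succ]
  field_simp

lemma hasDerivAt (ha : ConvergesOnBall a R) (hx : |x| < R) :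
    HasDerivAt (powSum a) (powSum (derivCoeff a) x) x := by
  obtain ⟨r, hxr, hrR⟩ := exists_between hx
  have hr : |r| < R := by rwa [abs_of_pos ((abs_nonneg x).trans_lt hxr)]
  have hsum : ∀ y, |y| < R →
      HasSum (fun n : ℕ => a n * (n * y ^ (n - 1))) (powSum (derivCoeff a) y) := fun y hy => by
    refine hasSum_of_hasSum_succ ((ha.deriv.hasSum hy).congr_fun fun n => ?_) (by simp)
    simp only [derivCoeff, Nat.add_sub_cancel, Nat.cast_succ]
    ring
  rw [← (hsum x hx).tsum_eq]
  refine hasDerivAt_tsum_of_isPreconnected (hsum r hr).summable.abs isOpen_Ioo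
    isPreconnected_Ioo (fun n y _ => (hasDerivAt_pow n y).const_mul (a n)) (fun n y hy => ?_)
    (abs_lt.1 hxr) (ha x hx) (abs_lt.1 hxr)
  have hy : |y| ≤ |r| := (abs_lt.2 hy).le.trans (le_abs_self r)
  simp only [norm_mul, norm_pow, abs_mul, abs_pow, Real.norm_eq_abs]
  gcongr

lemma hasDerivAt_div (ha : ConvergesOnBall a R) (hx : |x| < R) (hx0 : x ≠ 0)
    (hb : ∀ n : ℕ, b n = n * a n) : HasDerivAt (powSum a) (powSum b x / x) x := by
  have hsum : HasSum (fun n : ℕ => b n * x ^ n) (x * powSum (derivCoeff a) x) := by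
    refine hasSum_of_hasSum_succ (((ha.deriv.hasSum hx).mul_left x).congr_fun fun n => ?_)
      (by simp [hb])
    simp only [hb, derivCoeff, Nat.cast_succ]
    ring
  convert ha.hasDerivAt hx using 1
  rw [powSum, hsum.tsum_eq, mul_div_cancel_left₀ _ hx0]

lemma continuousOn (ha : ConvergesOnBall a R) : ContinuousOn (powSum a) {x | |x| < R} :=
  fun _ hx => (ha.hasDerivAt hx).continuousAt.continuousWithinAt

lemma mul_powSum_derivCoeff_derivCoeff_add (ha : ConvergesOnBall a R) (hx : |x| < R) :
    (4 * x - x ^ 2) * powSum (derivCoeff (derivCoeff a)) x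
        + (2 - x) * powSum (derivCoeff a) x
      = powSum (fun n => (n + 1) * (4 * n + 2) * a (n + 1) - n ^ 2 * a n) x := by
  have h1 := ha.deriv.hasSum hx
  have h2 := ha.deriv.deriv.hasSum hx
  have hx1 : HasSum (fun n : ℕ => n * a n * x ^ n) (x * powSum (derivCoeff a) x) :=
    hasSum_of_hasSum_succ ((h1.mul_left x).congr_fun fun n => by
      simp only [derivCoeff, Nat.cast_succ]; ring) (by simp)
  have hx2 : HasSum (fun n : ℕ => n * (n + 1) * a (n + 1) * x ^ n)
      (x * powSum (derivCoeff (derivCoeff a)) x) :=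
    hasSum_of_hasSum_succ ((h2.mul_left x).congr_fun fun n => by
      simp only [derivCoeff, Nat.cast_succ]; ring) (by simp)
  have hxx2 : HasSum (fun n : ℕ => n * (n - 1) * a n * x ^ n)
      (x * (x * powSum (derivCoeff (derivCoeff a)) x)) :=
    hasSum_of_hasSum_succ ((hx2.mul_left x).congr_fun fun n => by
      simp only [Nat.cast_succ]; ring) (by simp)
  refine Eq.trans ?_ ((((hx2.mul_left 4).sub hxx2).add ((h1.mul_left 2).sub hx1)).congr_fun
    fun n => ?_).tsum_eq.symm
  · ring
  · simp only [derivCoeff]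
    ring

end ConvergesOnBall

lemma tsum_two_mul_odd {a : ℕ → ℝ} {R : ℝ} (ha : ConvergesOnBall a R) (hR : 1 < R) :
    ∑' n : ℕ, 2 * a (2 * n + 1) = powSum a 1 - powSum a (-1) := by
  set f : ℕ → ℝ := fun n => a n * 1 ^ n - a n * (-1) ^ n
  have hf : HasSum f (powSum a 1 - powSum a (-1)) :=
    (ha.hasSum (by simpa)).sub (ha.hasSum (by simpa))
  have heven : ∀ n, f (2 * n) = 0 := fun n => by simp [f]
  have hodd : ∀ n, f (2 * n + 1) = 2 * a (2 * n + 1) := fun n => by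
    simp only [f, one_pow, Odd.neg_one_pow ⟨n, rfl⟩]
    ring
  rw [← hf.tsum_eq, ← tsum_even_add_odd (f := f)]
  · simp only [heven, hodd, tsum_zero, zero_add]
  · exact hf.summable.comp_injective fun m n hmn => by simpa using hmn
  · exact hf.summable.comp_injective fun m n hmn => by simpa using hmn

end PowerSum

section PolylogSeries

/-- The polylogarithm series `∑_{k ≥ 1} x^k / k^p`; `Li3` and `Li4` are the cases `p = 3, 4`. -/
noncomputable def polylogSeries (p : ℕ) (x : ℝ) : ℝ := ∑' k : ℕ, x ^ (k + 1) / ((k : ℝ) + 1) ^ p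

lemma Li3_eq_polylogSeries : Li3 = polylogSeries 3 := rfl

lemma Li4_eq_polylogSeries : Li4 = polylogSeries 4 := rfl

variable {p : ℕ} {x : ℝ}

lemma summable_one_div_nat_add_one_pow (hp : 1 < p) :
    Summable fun k : ℕ => 1 / ((k : ℝ) + 1) ^ p := by
  simpa using (summable_nat_add_iff 1).2 (Real.summable_one_div_nat_pow.2 hp)

lemma norm_polylogSeries_term_le (p : ℕ) (hx : |x| ≤ 1) (k : ℕ) :
    ‖x ^ (k + 1) / ((k : ℝ) + 1) ^ p‖ ≤ 1 / ((k : ℝ) + 1) ^ p := by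
  rw [norm_div, norm_pow, Real.norm_eq_abs, Real.norm_of_nonneg (by positivity)]
  gcongr
  exact pow_le_one₀ (abs_nonneg x) hx

lemma hasSum_polylogSeries (hp : 1 < p) (hx : |x| ≤ 1) :
    HasSum (fun k : ℕ => x ^ (k + 1) / ((k : ℝ) + 1) ^ p) (polylogSeries p x) :=
  ((summable_one_div_nat_add_one_pow hp).of_norm_bounded
    (norm_polylogSeries_term_le p hx)).hasSum

lemma continuousOn_polylogSeries (hp : 1 < p) : ContinuousOn (polylogSeries p) {x | |x| ≤ 1} :=
  continuousOn_tsum (fun k => by fun_prop) (summable_one_div_nat_add_one_pow hp)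
    fun k _ hx => norm_polylogSeries_term_le p hx k

lemma polylogSeries_add_neg (hp : 1 < p) (hx : |x| ≤ 1) :
    2 ^ p * (polylogSeries p x + polylogSeries p (-x)) = 2 * polylogSeries p (x ^ 2) := by
  have hsum := (hasSum_polylogSeries hp hx).add (hasSum_polylogSeries hp (x := -x) (by simpa))
  have heven : HasSum (fun k : ℕ => x ^ (2 * k + 1) / (((2 * k : ℕ) : ℝ) + 1) ^ p
      + (-x) ^ (2 * k + 1) / (((2 * k : ℕ) : ℝ) + 1) ^ p) 0 :=
    hasSum_zero.congr_fun fun k => by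
      rw [Odd.neg_pow ⟨k, rfl⟩]
      ring
  have hodd : HasSum (fun k : ℕ => x ^ (2 * k + 1 + 1) / (((2 * k + 1 : ℕ) : ℝ) + 1) ^ p
      + (-x) ^ (2 * k + 1 + 1) / (((2 * k + 1 : ℕ) : ℝ) + 1) ^ p)
      (2 / 2 ^ p * polylogSeries p (x ^ 2)) := by
    have hsq : |x ^ 2| ≤ 1 := by
      rw [abs_pow]
      exact pow_le_one₀ (abs_nonneg x) hx
    refine ((hasSum_polylogSeries hp hsq).mul_left (2 / 2 ^ p)).congr_fun fun k => ?_
    rw [show 2 * k + 1 + 1 = 2 * (k + 1) by ring, pow_mul, pow_mul, neg_sq,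
      show ((2 * k + 1 : ℕ) : ℝ) + 1 = 2 * (k + 1) by push_cast; ring, mul_pow]
    field_simp
    ring
  rw [hsum.unique (heven.even_add_odd hodd), zero_add]
  field_simp

lemma polylogSeries_two_one : polylogSeries 2 1 = Real.pi ^ 2 / 6 := by
  rw [← hasSum_zeta_two.tsum_eq, hasSum_zeta_two.summable.tsum_eq_zero_add]
  simp [polylogSeries]

lemma polylogSeries_two_neg_one : polylogSeries 2 (-1) = -(Real.pi ^ 2 / 12) := by
  have h := polylogSeries_add_neg (p := 2) (x := 1) (by norm_num) (by simp)
  norm_num [polylogSeries_two_one] at h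
  linarith

lemma polylogSeries_four_one : polylogSeries 4 1 = Real.pi ^ 4 / 90 := by
  rw [← hasSum_zeta_four.tsum_eq, hasSum_zeta_four.summable.tsum_eq_zero_add]
  simp [polylogSeries]

lemma polylogSeries_four_neg_one : polylogSeries 4 (-1) = -(7 * Real.pi ^ 4 / 720) := by
  have h := polylogSeries_add_neg (p := 4) (x := 1) (by norm_num) (by simp)
  norm_num [polylogSeries_four_one] at h
  linarith

lemma convergesOnBall_polylogCoeff (p : ℕ) :
    ConvergesOnBall (fun n => n / (n : ℝ) ^ (p + 1)) 1 := by
  refine ConvergesOnBall.mono (b := fun _ => 1)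
    (fun x hx => by simpa using summable_geometric_of_abs_lt_one hx) fun n => ?_
  rw [abs_of_nonneg (by positivity), abs_one]
  refine div_le_one_of_le₀ ?_ (by positivity)
  exact_mod_cast Nat.le_self_pow p.succ_ne_zero n

lemma polylogSeries_eq_powSum (p : ℕ) (hx : |x| < 1) :
    polylogSeries p x = powSum (fun n => n / (n : ℝ) ^ (p + 1)) x := by
  rw [powSum, (convergesOnBall_polylogCoeff p x hx).tsum_eq_zero_add]
  simp only [Nat.cast_zero, zero_div, zero_mul, zero_add]
  refine tsum_congr fun k => ?_
  push_cast
  field_simp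
  ring

end PolylogSeries

section Polylog

/-- The polylogarithm `Li_p` on `(-∞, 1)`, by iterated integration of `Li_p(t) / t` from
`Li_0(x) = x / (1 - x)`. The difference quotient `dslope` at `0` is `Li_p(t) / t` with the removable
singularity at `t = 0` filled in. Arguments `x ≥ 1` carry no meaning. -/
noncomputable def polylog : ℕ → ℝ → ℝ
  | 0 => fun x => x / (1 - x)
  | p + 1 => fun x => ∫ t in (0 : ℝ)..x, dslope (polylog p) 0 t

lemma polylog_zero_right (p : ℕ) : polylog p 0 = 0 := by
  cases p <;> simp [polylog]

lemma hasDerivAt_integral_dslope {f : ℝ → ℝ} (hf : DifferentiableOn ℝ f (Iio 1)) {x : ℝ}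
    (hx : x < 1) : HasDerivAt (fun y => ∫ t in (0 : ℝ)..y, dslope f 0 t) (dslope f 0 x) x := by
  have hcont : ContinuousOn (dslope f 0) (Iio 1) :=
    (continuousOn_dslope (Iio_mem_nhds one_pos)).2
      ⟨hf.continuousOn, hf.differentiableAt (Iio_mem_nhds one_pos)⟩
  refine intervalIntegral.integral_hasDerivAt_right ?_
    (hcont.stronglyMeasurableAtFilter isOpen_Iio x hx) (hcont.continuousAt (Iio_mem_nhds hx))
  exact (hcont.mono fun y hy => hy.2.trans_lt (max_lt one_pos hx)).intervalIntegrable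

lemma differentiableOn_polylog (p : ℕ) : DifferentiableOn ℝ (polylog p) (Iio 1) := by
  induction p with
  | zero =>
    exact differentiableOn_id.div (by fun_prop) fun x hx => sub_ne_zero.2 (ne_of_gt hx)
  | succ p ih =>
    exact fun x hx => (hasDerivAt_integral_dslope ih hx).differentiableAt.differentiableWithinAt

lemma continuousOn_polylog (p : ℕ) : ContinuousOn (polylog p) (Iio 1) :=
  (differentiableOn_polylog p).continuousOn

variable {p : ℕ} {x : ℝ}

lemma hasDerivAt_polylog (p : ℕ) (hx : x < 1) (hx0 : x ≠ 0) :
    HasDerivAt (polylog (p + 1)) (polylog p x / x) x := by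
  refine (hasDerivAt_integral_dslope (differentiableOn_polylog p) hx).congr_deriv ?_
  rw [dslope_of_ne _ hx0, slope_def_field, polylog_zero_right, sub_zero, sub_zero]

lemma polylog_one (hx : x < 1) : polylog 1 x = -Real.log (1 - x) := by
  have hlt : ∀ y ∈ uIcc 0 x, y < 1 := fun y hy => hy.2.trans_lt (max_lt one_pos hx)
  refine eq_of_hasDerivAt_eq (g := fun y => -Real.log (1 - y)) (f' := fun y => (1 - y)⁻¹) (a := 0)
    ((continuousOn_polylog 1).mono hlt) ?_ (fun y hy => ?_) (fun y hy => ?_) ?_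
  · exact ((continuousOn_const.sub continuousOn_id).log fun y hy =>
      sub_ne_zero.2 (hlt y hy).ne').neg
  · have hy1 := hlt y (uIoo_subset_uIcc_self hy)
    have hy0 := ne_of_mem_of_not_mem hy left_notMem_uIoo
    refine (hasDerivAt_polylog 0 hy1 hy0).congr_deriv ?_
    rw [polylog, div_right_comm, div_self hy0, one_div]
  · refine (((hasDerivAt_id y).const_sub 1).log
      (sub_ne_zero.2 (hlt y (uIoo_subset_uIcc_self hy)).ne')).neg.congr_deriv ?_
    simp only [id_eq, neg_div, neg_neg, one_div]
  · simp [polylog_zero_right]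

lemma polylog_eq_powSum (p : ℕ) (hx : |x| < 1) :
    polylog p x = powSum (fun n => n / (n : ℝ) ^ (p + 1)) x := by
  induction p generalizing x with
  | zero =>
    rw [← polylogSeries_eq_powSum 0 hx, polylog, polylogSeries]
    simp [pow_succ, tsum_mul_right, tsum_geometric_of_abs_lt_one hx, div_eq_inv_mul]
  | succ p ih =>
    have hlt : ∀ y ∈ uIcc 0 x, |y| < 1 := fun y hy => by
      simpa using (abs_sub_left_of_mem_uIcc hy).trans_lt (by simpa using hx)
    have hcoeff := convergesOnBall_polylogCoeff (p + 1)
    refine eq_of_hasDerivAt_eq (f' := fun y => polylog p y / y) (a := 0)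
      ((continuousOn_polylog _).mono fun y hy => (abs_lt.1 (hlt y hy)).2)
      (hcoeff.continuousOn.mono hlt) (fun y hy => ?_) (fun y hy => ?_) ?_
    · exact hasDerivAt_polylog p (abs_lt.1 (hlt y (uIoo_subset_uIcc_self hy))).2
        (ne_of_mem_of_not_mem hy left_notMem_uIoo)
    · have hy' := hlt y (uIoo_subset_uIcc_self hy)
      rw [ih hy']
      refine hcoeff.hasDerivAt_div hy' (ne_of_mem_of_not_mem hy left_notMem_uIoo)
        fun n => ?_
      rcases eq_or_ne n 0 with rfl | hn
      · simp
      · rw [pow_succ' (n : ℝ) (p + 1)]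
        field_simp
    · simp [polylog_zero_right, powSum_zero]

lemma polylog_eq_polylogSeries (hp : 1 < p) (hx : x ∈ Ico (-1) 1) :
    polylog p x = polylogSeries p x := by
  have hinner : EqOn (polylog p) (polylogSeries p) (Ioo (-1) 1) := fun y hy =>
    (polylog_eq_powSum p (abs_lt.2 hy)).trans (polylogSeries_eq_powSum p (abs_lt.2 hy)).symm
  refine hinner.of_subset_closure ((continuousOn_polylog p).mono fun y hy => hy.2)
    ((continuousOn_polylogSeries hp).mono fun y hy => abs_le.2 ⟨hy.1, hy.2.le⟩)
    Ioo_subset_Ico_self ?_ hx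
  rw [closure_Ioo (by norm_num)]
  exact Ico_subset_Icc_self

end Polylog

section CentralBinomialSeries

/-- The coefficients `1 / (n ^ p * C(2n, n))` of the Apéry-like series; for `p ≠ 0` the coefficient
at `n = 0` is `0`. -/
noncomputable def aperyCoeff (p n : ℕ) : ℝ := 1 / ((n : ℝ) ^ p * n.centralBinom)

/-- The partial sums `∑_{0 < i < n} 1 / i ^ 2`; the term `i = 0` is `1 / 0 = 0`. -/
noncomputable def harmonicSq (n : ℕ) : ℝ := ∑ i ∈ Finset.range n, 1 / (i : ℝ) ^ 2

lemma cast_centralBinom_pos (n : ℕ) : (0 : ℝ) < n.centralBinom :=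
  Nat.cast_pos.2 n.centralBinom_pos

lemma cast_centralBinom_succ (n : ℕ) :
    ((n + 1).centralBinom : ℝ) = 2 * (2 * n + 1) / (n + 1) * n.centralBinom := by
  have h : ((n : ℝ) + 1) * (n + 1).centralBinom = 2 * (2 * n + 1) * n.centralBinom :=
    mod_cast n.succ_mul_centralBinom_succ
  field_simp
  linarith

lemma aperyCoeff_nonneg (p n : ℕ) : 0 ≤ aperyCoeff p n := by
  unfold aperyCoeff
  positivity

lemma aperyCoeff_zero_zero : aperyCoeff 0 0 = 1 := by
  simp [aperyCoeff]

lemma harmonicSq_nonneg (n : ℕ) : 0 ≤ harmonicSq n :=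
  Finset.sum_nonneg fun i _ => by positivity

lemma harmonicSq_succ (n : ℕ) : harmonicSq (n + 1) = harmonicSq n + 1 / (n : ℝ) ^ 2 :=
  Finset.sum_range_succ _ n

lemma harmonicSq_one : harmonicSq 1 = 0 := by
  simp [harmonicSq]

lemma harmonicSq_le (n : ℕ) : harmonicSq n ≤ Real.pi ^ 2 / 6 :=
  sum_le_hasSum _ (fun i _ => by positivity) hasSum_zeta_two

lemma convergesOnBall_aperyCoeff (p : ℕ) : ConvergesOnBall (aperyCoeff p) 4 := by
  refine ConvergesOnBall.mono (b := fun n => (2 * n + 1) / 4 ^ n) (fun x hx => ?_) fun n => ?_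
  · have hlt : ‖x / 4‖ < 1 := by
      rwa [Real.norm_eq_abs, abs_div, Nat.abs_ofNat, div_lt_one four_pos]
    refine (((summable_pow_mul_geometric_of_norm_lt_one 1 hlt).mul_left 2).add
      (summable_geometric_of_norm_lt_one hlt)).congr fun n => ?_
    rw [div_pow]
    ring
  · rw [abs_of_nonneg (aperyCoeff_nonneg p n), abs_of_nonneg (by positivity), aperyCoeff]
    rcases eq_or_ne n 0 with rfl | hn
    · rcases eq_or_ne p 0 with rfl | hp <;> simp [*]
    · have hone : (1 : ℝ) ≤ (n : ℝ) ^ p := one_le_pow₀ (mod_cast Nat.one_le_iff_ne_zero.2 hn)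
      have hfour : (4 : ℝ) ^ n ≤ 2 * n * n.centralBinom :=
        mod_cast Nat.four_pow_le_two_mul_self_mul_centralBinom n (Nat.pos_of_ne_zero hn)
      have hC := cast_centralBinom_pos n
      rw [div_le_div_iff₀ (by positivity) (by positivity), one_mul]
      nlinarith [mul_le_mul_of_nonneg_right hone hC.le]

lemma aperyCoeff_eq_nat_mul {p : ℕ} (hp : p ≠ 0) (n : ℕ) :
    aperyCoeff p n = n * aperyCoeff (p + 1) n := by
  rcases eq_or_ne n 0 with rfl | hn
  · simp [aperyCoeff, hp]
  · rw [aperyCoeff, aperyCoeff, pow_succ]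
    field_simp

lemma sq_mul_aperyCoeff_two {n : ℕ} (hn : n ≠ 0) :
    (n : ℝ) ^ 2 * aperyCoeff 2 n = aperyCoeff 0 n := by
  rw [aperyCoeff, aperyCoeff]
  field_simp

lemma mul_aperyCoeff_two_succ (n : ℕ) :
    (n + 1) * (4 * n + 2) * aperyCoeff 2 (n + 1) = aperyCoeff 0 n := by
  have hC := (cast_centralBinom_pos n).ne'
  rw [aperyCoeff, aperyCoeff, cast_centralBinom_succ]
  push_cast
  field_simp
  ring

lemma convergesOnBall_harmonicSq_mul_aperyCoeff :
    ConvergesOnBall (fun n => harmonicSq n * aperyCoeff 2 n) 4 := by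
  refine ((convergesOnBall_aperyCoeff 2).const_mul (Real.pi ^ 2 / 6)).mono fun n => ?_
  rw [abs_mul, abs_mul, abs_of_nonneg (harmonicSq_nonneg n),
    abs_of_nonneg (by positivity : 0 ≤ Real.pi ^ 2 / 6)]
  exact mul_le_mul_of_nonneg_right (harmonicSq_le n) (abs_nonneg _)

/-- A function `s` with derivative `s'` on the interval from `0` to `x` that behaves there like
`2 - 2 cos` (`ε = 1`) or `2 - 2 cosh` (`ε = -1`). After the substitution `s`, the second-order
differential operator annihilating the Apéry-like series up to lower terms is `ε` times the second
derivative. -/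
structure IsAperyCurve (ε x : ℝ) (s s' : ℝ → ℝ) : Prop where
  zero : s 0 = 0
  abs_lt : ∀ y ∈ uIcc 0 x, |s y| < 4
  hasDerivAt : ∀ y ∈ uIcc 0 x, HasDerivAt s (s' y) y
  hasDerivAt' : ∀ y ∈ uIcc 0 x, HasDerivAt s' (ε * (2 - s y)) y
  sq_eq : ∀ y ∈ uIcc 0 x, s' y ^ 2 = ε * (4 * s y - s y ^ 2)

namespace IsAperyCurve

variable {a b : ℕ → ℝ} {ε x : ℝ} {s s' : ℝ → ℝ}

lemma mono (h : IsAperyCurve ε x s s') {y : ℝ} (hy : y ∈ uIcc 0 x) : IsAperyCurve ε y s s' := by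
  have hsub := uIcc_subset_uIcc_left hy
  exact ⟨h.zero, fun z hz => h.abs_lt z (hsub hz), fun z hz => h.hasDerivAt z (hsub hz),
    fun z hz => h.hasDerivAt' z (hsub hz), fun z hz => h.sq_eq z (hsub hz)⟩

lemma powSum_comp_eq (h : IsAperyCurve ε x s s') (ha : ConvergesOnBall a 4) (ha0 : a 0 = 0)
    (hab : ∀ n : ℕ, (n + 1) * (4 * n + 2) * a (n + 1) - n ^ 2 * a n = b n) {g g' : ℝ → ℝ}
    (hg0 : g 0 = 0) (hg'0 : g' 0 = 0) (hg : ∀ y, HasDerivAt g (g' y) y)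
    (hg' : ∀ y ∈ uIcc 0 x, HasDerivAt g' (ε * powSum b (s y)) y) : powSum a (s x) = g x := by
  have hs'0 : s' 0 = 0 := by simpa [h.zero] using h.sq_eq 0 left_mem_uIcc
  refine eq_of_hasDerivAt_of_hasDerivAt_eq (f := fun y => powSum a (s y))
    (fun y hy => (ha.hasDerivAt (h.abs_lt y hy)).comp y (h.hasDerivAt y hy)) (fun y _ => hg y)
    (fun y hy => ?_) hg' (by simp [h.zero, powSum_zero, ha0, hg0]) (by simp [hs'0, hg'0])
  refine (((ha.deriv.hasDerivAt (h.abs_lt y hy)).comp y (h.hasDerivAt y hy)).mul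
    (h.hasDerivAt' y hy)).congr_deriv ?_
  rw [← funext hab, ← ha.mul_powSum_derivCoeff_derivCoeff_add (h.abs_lt y hy), Function.comp_apply]
  linear_combination powSum (derivCoeff (derivCoeff a)) (s y) * h.sq_eq y hy

lemma powSum_aperyCoeff_two (h : IsAperyCurve ε x s s') :
    powSum (aperyCoeff 2) (s x) = ε * x ^ 2 / 2 := by
  have hrec : ∀ n : ℕ, (n + 1) * (4 * n + 2) * aperyCoeff 2 (n + 1) - n ^ 2 * aperyCoeff 2 n
      = if n = 0 then 1 else 0 := fun n => by
    rw [mul_aperyCoeff_two_succ]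
    split_ifs with hn
    · simp [hn, aperyCoeff]
    · rw [sq_mul_aperyCoeff_two hn, sub_self]
  have hone : ∀ y, powSum (fun n => if n = 0 then 1 else 0) y = 1 := fun y => by
    simp [powSum, ite_mul]
  refine h.powSum_comp_eq (g := fun y => ε * y ^ 2 / 2) (g' := fun y => ε * y)
    (convergesOnBall_aperyCoeff 2) (by simp [aperyCoeff]) hrec (by simp) (by simp)
    (fun y => ?_) fun y _ => ?_
  · exact (((hasDerivAt_pow 2 y).const_mul ε).div_const 2).congr_deriv (by ring)
  · rw [hone]
    exact (hasDerivAt_id y).const_mul ε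

lemma powSum_harmonicSq_mul_aperyCoeff_two (h : IsAperyCurve ε x s s') :
    powSum (fun n => harmonicSq n * aperyCoeff 2 n) (s x) = ε ^ 2 * x ^ 4 / 24 := by
  have hrec : ∀ n : ℕ, (n + 1) * (4 * n + 2) * (harmonicSq (n + 1) * aperyCoeff 2 (n + 1))
      - n ^ 2 * (harmonicSq n * aperyCoeff 2 n) = aperyCoeff 2 n := fun n => by
    rw [mul_left_comm, mul_aperyCoeff_two_succ, harmonicSq_succ]
    rcases eq_or_ne n 0 with rfl | hn
    · simp [harmonicSq, aperyCoeff]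
    · rw [← sq_mul_aperyCoeff_two hn]
      field_simp
      ring
  refine h.powSum_comp_eq (g := fun y => ε ^ 2 * y ^ 4 / 24) (g' := fun y => ε ^ 2 * y ^ 3 / 6)
    convergesOnBall_harmonicSq_mul_aperyCoeff (by simp [harmonicSq]) hrec (by simp) (by simp)
    (fun y => ?_) fun y hy => ?_
  · exact (((hasDerivAt_pow 4 y).const_mul (ε ^ 2)).div_const 24).congr_deriv (by ring)
  · rw [(h.mono hy).powSum_aperyCoeff_two]
    exact (((hasDerivAt_pow 3 y).const_mul (ε ^ 2)).div_const 6).congr_deriv (by ring)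

end IsAperyCurve

lemma isAperyCurve_cos {x : ℝ} (hx : |x| < Real.pi) :
    IsAperyCurve 1 x (fun y => 2 - 2 * Real.cos y) fun y => 2 * Real.sin y where
  zero := by simp
  abs_lt y hy := by
    have hy : |y| < Real.pi := by
      simpa using (abs_sub_left_of_mem_uIcc hy).trans_lt (by simpa using hx)
    have hcos : -1 < Real.cos y := by
      rw [← Real.cos_abs, ← Real.cos_pi]
      exact Real.cos_lt_cos_of_nonneg_of_le_pi (abs_nonneg y) le_rfl hy
    rw [abs_lt]
    constructor <;> linarith [Real.cos_le_one y]
  hasDerivAt y _ := (((Real.hasDerivAt_cos y).const_mul 2).const_sub 2).congr_deriv (by ring)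
  hasDerivAt' y _ := ((Real.hasDerivAt_sin y).const_mul 2).congr_deriv (by ring)
  sq_eq y _ := by linear_combination 4 * Real.sin_sq_add_cos_sq y

lemma cosh_le_cosh_of_mem_uIcc {x y : ℝ} (hy : y ∈ uIcc 0 x) : Real.cosh y ≤ Real.cosh x :=
  Real.cosh_le_cosh.2 (by simpa using abs_sub_left_of_mem_uIcc hy)

lemma isAperyCurve_cosh {x : ℝ} (hx : Real.cosh x < 3) :
    IsAperyCurve (-1) x (fun y => 2 - 2 * Real.cosh y) fun y => -(2 * Real.sinh y) where
  zero := by simp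
  abs_lt y hy := by
    rw [abs_lt]
    constructor <;> linarith [Real.one_le_cosh y, cosh_le_cosh_of_mem_uIcc hy]
  hasDerivAt y _ := ((Real.hasDerivAt_cosh y).const_mul 2).const_sub 2
  hasDerivAt' y _ := ((Real.hasDerivAt_sinh y).const_mul 2).neg.congr_deriv (by ring)
  sq_eq y _ := by linear_combination 4 * Real.sinh_sq y

lemma powSum_aperyCoeff_two_cosh {x : ℝ} (hx : Real.cosh x < 3) :
    powSum (aperyCoeff 2) (2 - 2 * Real.cosh x) = -(x ^ 2 / 2) := by
  rw [(isAperyCurve_cosh hx).powSum_aperyCoeff_two]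
  ring

lemma tsum_harmonicSq_mul_aperyCoeff_two :
    ∑' n, harmonicSq n * aperyCoeff 2 n = Real.pi ^ 4 / 1944 := by
  have hcurve := isAperyCurve_cos (x := Real.pi / 3) (by
    rw [abs_of_pos (by positivity)]
    linarith [Real.pi_pos])
  have hsum := hcurve.powSum_harmonicSq_mul_aperyCoeff_two
  simp only [Real.cos_pi_div_three] at hsum
  rw [← powSum_one, show (1 : ℝ) = 2 - 2 * (1 / 2) by norm_num, hsum]
  ring

end CentralBinomialSeries

section MarkovWZ

lemma tsum_eq_tsum_of_telescoping {F G : ℕ → ℕ → ℝ} (hF : ∀ n, Summable (F n))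
    (hG : ∀ n, Tendsto (G n) atTop (𝓝 0))
    (hFG : ∀ n k, F n k - F (n + 1) k = G n k - G n (k + 1))
    (hlim : Tendsto (fun n => ∑' k, F n k) atTop (𝓝 0)) (hG0 : Summable fun n => G n 0) :
    ∑' n, G n 0 = ∑' k, F 0 k := by
  have hrow : ∀ n, G n 0 = ∑' k, F n k - ∑' k, F (n + 1) k := fun n => by
    have hsub := ((hF n).hasSum.sub (hF (n + 1)).hasSum).tendsto_sum_nat
    simp only [hFG, Finset.sum_range_sub'] at hsub
    exact tendsto_nhds_unique (by simpa using (hG n).const_sub (G n 0)) hsub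
  have hpartial : Tendsto (fun N => ∑ n ∈ Finset.range N, G n 0) atTop (𝓝 (∑' k, F 0 k)) := by
    simp only [hrow, Finset.sum_range_sub']
    simpa using hlim.const_sub (∑' k, F 0 k)
  exact tendsto_nhds_unique hG0.hasSum.tendsto_sum_nat hpartial

open Nat in
/-- The Beta integral `B(n + 1, k + 1)`. -/
noncomputable def natBeta (n k : ℕ) : ℝ := (n ! * k ! : ℕ) / ((n + k + 1) ! : ℕ)

/-- The harmonic factor `∑_{k < j ≤ n + k + 1} 1 / j ^ 2 - 4 * ∑_{1 ≤ m ≤ n} 1 / m ^ 2` of the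
Markov–WZ pair. -/
noncomputable def wzHarmonic (n k : ℕ) : ℝ :=
  harmonicSq (n + k + 2) - harmonicSq (k + 1) - 4 * harmonicSq (n + 1)

/-- The first member of a Markov–WZ pair deforming `∑_k 1 / (k + 1) ^ 4`, its row `n = 0`. -/
noncomputable def wzF (n k : ℕ) : ℝ := natBeta n k ^ 2 * aperyCoeff 0 n * wzHarmonic n k

/-- The companion of `wzF`; its column `k = 0` consists of central binomial terms. -/
noncomputable def wzG (n k : ℕ) : ℝ := (3 * n + 3 + 2 * k) / (4 * n + 2) * wzF n k

lemma natBeta_succ_left (n k : ℕ) :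
    natBeta (n + 1) k = (n + 1) / (n + k + 2) * natBeta n k := by
  rw [natBeta, natBeta, show n + 1 + k + 1 = (n + k + 1) + 1 by ring, Nat.factorial_succ,
    Nat.factorial_succ (n + k + 1)]
  push_cast
  field_simp
  ring

lemma natBeta_succ_right (n k : ℕ) :
    natBeta n (k + 1) = (k + 1) / (n + k + 2) * natBeta n k := by
  rw [natBeta, natBeta, show n + (k + 1) + 1 = (n + k + 1) + 1 by ring, Nat.factorial_succ,
    Nat.factorial_succ (n + k + 1)]
  push_cast
  field_simp
  ring

lemma natBeta_zero_left (k : ℕ) : natBeta 0 k = 1 / (k + 1) := by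
  rw [natBeta, zero_add, Nat.factorial_succ, Nat.factorial_zero]
  push_cast
  field_simp

lemma natBeta_zero_right (n : ℕ) : natBeta n 0 = 1 / (n + 1) := by
  rw [natBeta, add_zero, Nat.factorial_succ, Nat.factorial_zero]
  push_cast
  field_simp

lemma natBeta_nonneg (n k : ℕ) : 0 ≤ natBeta n k := by
  unfold natBeta
  positivity

lemma natBeta_le (n k : ℕ) : natBeta n k ≤ 1 / (k + 1) := by
  rw [natBeta, div_le_div_iff₀ (by positivity) (by positivity), one_mul]
  have h := Nat.le_of_dvd (Nat.factorial_pos _)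
    (Nat.factorial_mul_factorial_dvd_factorial_add n (k + 1))
  rw [Nat.factorial_succ, mul_left_comm, mul_comm] at h
  exact_mod_cast h

lemma wzF_sub_wzF_succ (n k : ℕ) : wzF n k - wzF (n + 1) k = wzG n k - wzG n (k + 1) := by
  have hleft : wzHarmonic (n + 1) k
      = wzHarmonic n k + 1 / (n + k + 2) ^ 2 - 4 * (1 / (n + 1) ^ 2) := by
    rw [wzHarmonic, wzHarmonic, show n + 1 + k + 2 = n + k + 2 + 1 by ring,
      harmonicSq_succ (n + k + 2), harmonicSq_succ (n + 1)]
    push_cast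
    ring
  have hright : wzHarmonic n (k + 1)
      = wzHarmonic n k + 1 / (n + k + 2) ^ 2 - 1 / (k + 1) ^ 2 := by
    rw [wzHarmonic, wzHarmonic, show n + (k + 1) + 2 = n + k + 2 + 1 by ring,
      harmonicSq_succ (n + k + 2), harmonicSq_succ (k + 1)]
    push_cast
    ring
  simp only [wzG, wzF, hleft, hright, natBeta_succ_left, natBeta_succ_right,
    ← mul_aperyCoeff_two_succ n, ← sq_mul_aperyCoeff_two n.succ_ne_zero]
  push_cast
  field_simp
  ring

lemma abs_wzF_le (n k : ℕ) :
    |wzF n k| ≤ 5 * (Real.pi ^ 2 / 6) * aperyCoeff 0 n * (1 / ((k : ℝ) + 1) ^ 2) := by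
  have hharmonic : |wzHarmonic n k| ≤ 5 * (Real.pi ^ 2 / 6) := by
    rw [wzHarmonic, abs_le]
    constructor <;>
      linarith [harmonicSq_nonneg (n + k + 2), harmonicSq_le (n + k + 2), harmonicSq_le (k + 1),
        harmonicSq_nonneg (k + 1), harmonicSq_le (n + 1), harmonicSq_nonneg (n + 1)]
  have ha := aperyCoeff_nonneg 0 n
  calc |wzF n k| = natBeta n k ^ 2 * aperyCoeff 0 n * |wzHarmonic n k| := by
        rw [wzF, abs_mul, abs_of_nonneg (by positivity)]
    _ ≤ (1 / ((k : ℝ) + 1)) ^ 2 * aperyCoeff 0 n * (5 * (Real.pi ^ 2 / 6)) := by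
        gcongr
        exacts [natBeta_nonneg n k, natBeta_le n k]
    _ = _ := by
        rw [one_div_pow]
        ring

lemma wzF_zero (k : ℕ) : wzF 0 k = 1 / ((k : ℝ) + 1) ^ 4 := by
  rw [wzF, natBeta_zero_left, wzHarmonic, show 0 + k + 2 = k + 1 + 1 by ring,
    harmonicSq_succ (k + 1), harmonicSq_one, aperyCoeff_zero_zero]
  push_cast
  field_simp
  ring

lemma wzG_zero_right (n : ℕ) :
    wzG n 0 = 3 * aperyCoeff 4 (n + 1) - 9 * (harmonicSq (n + 1) * aperyCoeff 2 (n + 1)) := by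
  have hfour : aperyCoeff 4 (n + 1) = 1 / ((n : ℝ) + 1) ^ 2 * aperyCoeff 2 (n + 1) := by
    rw [aperyCoeff, aperyCoeff]
    push_cast
    field_simp
  rw [wzG, wzF, natBeta_zero_right, wzHarmonic, harmonicSq_succ (n + 1), hfour,
    ← mul_aperyCoeff_two_succ, zero_add, harmonicSq_one]
  push_cast
  field_simp
  ring

lemma tendsto_wzG (n : ℕ) : Tendsto (wzG n) atTop (𝓝 0) := by
  set c := 5 * (Real.pi ^ 2 / 6) * aperyCoeff 0 n
  refine squeeze_zero_norm (a := fun k : ℕ => (3 * n + 3) * c * (1 / ((k : ℝ) + 1)))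
    (fun k => ?_)
    (by simpa using
      (tendsto_one_div_add_atTop_nhds_zero_nat (𝕜 := ℝ)).const_mul ((3 * n + 3) * c))
  have hratio : ((3 : ℝ) * n + 3 + 2 * k) / (4 * n + 2) ≤ (3 * n + 3) * (k + 1) := by
    rw [div_le_iff₀ (by positivity)]
    have hnk : (0 : ℝ) ≤ n * k := by positivity
    have hnnk : (0 : ℝ) ≤ n * n * k := by positivity
    nlinarith
  calc ‖wzG n k‖ = (3 * n + 3 + 2 * k) / (4 * n + 2) * |wzF n k| := by
        rw [wzG, Real.norm_eq_abs, abs_mul, abs_of_nonneg (by positivity)]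
    _ ≤ (3 * n + 3) * (k + 1) * (c * (1 / ((k : ℝ) + 1) ^ 2)) := by
        gcongr
        exact abs_wzF_le n k
    _ = (3 * n + 3) * c * (1 / ((k : ℝ) + 1)) := by field_simp

lemma tendsto_tsum_wzF : Tendsto (fun n => ∑' k, wzF n k) atTop (𝓝 0) := by
  have ha : Tendsto (aperyCoeff 0) atTop (𝓝 0) := by
    simpa using (convergesOnBall_aperyCoeff 0 1 (by norm_num)).tendsto_atTop_zero
  refine squeeze_zero_norm (fun n => tsum_of_norm_bounded
    ((summable_one_div_nat_add_one_pow one_lt_two).hasSum.mul_left _) (abs_wzF_le n)) ?_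
  simpa using (ha.const_mul (5 * (Real.pi ^ 2 / 6))).mul_const _

lemma tsum_aperyCoeff_four_sub_tsum_harmonicSq :
    3 * ∑' n, aperyCoeff 4 n - 9 * ∑' n, harmonicSq n * aperyCoeff 2 n = Real.pi ^ 4 / 90 := by
  have hfour : Summable (aperyCoeff 4) := by
    simpa using convergesOnBall_aperyCoeff 4 1 (by norm_num)
  have hharmonic : Summable fun n => harmonicSq n * aperyCoeff 2 n := by
    simpa using convergesOnBall_harmonicSq_mul_aperyCoeff 1 (by norm_num)
  have hshift : HasSum (fun n => wzG n 0)
      (3 * ∑' n, aperyCoeff 4 n - 9 * ∑' n, harmonicSq n * aperyCoeff 2 n) := by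
    simpa [wzG_zero_right, aperyCoeff, harmonicSq] using (hasSum_nat_add_iff' 1).2
      ((hfour.hasSum.mul_left 3).sub (hharmonic.hasSum.mul_left 9))
  rw [← hshift.tsum_eq, tsum_eq_tsum_of_telescoping (fun n => ?_) tendsto_wzG wzF_sub_wzF_succ
    tendsto_tsum_wzF hshift.summable, ← polylogSeries_four_one]
  · simp [polylogSeries, wzF_zero]
  · exact ((summable_one_div_nat_add_one_pow one_lt_two).mul_left _).of_norm_bounded (abs_wzF_le n)

lemma powSum_aperyCoeff_four_one : powSum (aperyCoeff 4) 1 = 17 * Real.pi ^ 4 / 3240 := by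
  have h := tsum_aperyCoeff_four_sub_tsum_harmonicSq
  rw [tsum_harmonicSq_mul_aperyCoeff_two] at h
  rw [powSum_one]
  linarith

end MarkovWZ

section Inversion

variable {p : ℕ}

lemma hasDerivAt_polylog_comp (p : ℕ) {u : ℝ → ℝ} {u' t : ℝ} (hu : HasDerivAt u u' t)
    (hlt : u t < 1) (hne : u t ≠ 0) :
    HasDerivAt (fun t => polylog (p + 1) (u t)) (polylog p (u t) * (u' / u t)) t :=
  ((hasDerivAt_polylog p hlt hne).comp t hu).congr_deriv (by ring)

lemma hasDerivAt_polylog_neg_exp (p : ℕ) (t : ℝ) :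
    HasDerivAt (fun t => polylog (p + 1) (-Real.exp t)) (polylog p (-Real.exp t)) t := by
  have hpos := Real.exp_pos t
  refine (hasDerivAt_polylog_comp p (Real.hasDerivAt_exp t).fun_neg (by linarith)
    (neg_ne_zero.2 hpos.ne')).congr_deriv ?_
  rw [div_self (neg_ne_zero.2 hpos.ne'), mul_one]

lemma polylog_neg_exp_add_succ {ε : ℝ} {q Q : ℝ → ℝ}
    (hq : ∀ t, polylog p (-Real.exp t) - ε * polylog p (-Real.exp (-t)) = q t)
    (hQ : ∀ t, HasDerivAt Q (q t) t) (hQ0 : (1 + ε) * polylog (p + 1) (-1) = Q 0) (t : ℝ) :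
    polylog (p + 1) (-Real.exp t) + ε * polylog (p + 1) (-Real.exp (-t)) = Q t := by
  have hderiv : ∀ t, HasDerivAt (fun t => polylog (p + 1) (-Real.exp t)
      + ε * polylog (p + 1) (-Real.exp (-t))) (q t) t := fun t => by
    have hneg := (hasDerivAt_polylog_neg_exp p (-t)).comp t (hasDerivAt_neg t)
    exact ((hasDerivAt_polylog_neg_exp p t).add (hneg.const_mul ε)).congr_deriv
      (by linear_combination hq t)
  refine eq_of_hasDerivAt_eq (a := 0) (fun x _ => (hderiv x).continuousAt.continuousWithinAt)
    (fun x _ => (hQ x).continuousAt.continuousWithinAt) (fun x _ => hderiv x) (fun x _ => hQ x) ?_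
  simp only [← hQ0, neg_zero, Real.exp_zero]
  ring

lemma polylog_one_neg_exp_sub (t : ℝ) :
    polylog 1 (-Real.exp t) - polylog 1 (-Real.exp (-t)) = -t := by
  have hpos := Real.exp_pos t
  have hneg := Real.exp_pos (-t)
  have hfactor : 1 + Real.exp t = Real.exp t * (1 + Real.exp (-t)) := by
    rw [mul_add, ← Real.exp_add, add_neg_cancel, Real.exp_zero, mul_one, add_comm]
  rw [polylog_one (by linarith), polylog_one (by linarith), sub_neg_eq_add, sub_neg_eq_add,
    sub_neg_eq_add, hfactor, Real.log_mul hpos.ne' (by positivity), Real.log_exp]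
  ring

lemma polylog_two_neg_exp_add (t : ℝ) :
    polylog 2 (-Real.exp t) + polylog 2 (-Real.exp (-t)) = -(t ^ 2 / 2) - Real.pi ^ 2 / 6 := by
  have h := polylog_neg_exp_add_succ (p := 1) (ε := 1) (q := fun t => -t)
    (Q := fun t => -(t ^ 2 / 2) - Real.pi ^ 2 / 6)
    (fun t => by rw [one_mul, polylog_one_neg_exp_sub])
    (fun t => (((hasDerivAt_pow 2 t).div_const 2).neg.sub_const _).congr_deriv (by ring))
    (by
      rw [one_add_one_eq_two, one_add_one_eq_two,
        polylog_eq_polylogSeries one_lt_two (by norm_num), polylogSeries_two_neg_one]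
      ring) t
  rwa [one_mul] at h

lemma polylog_three_neg_exp_sub (t : ℝ) :
    polylog 3 (-Real.exp t) - polylog 3 (-Real.exp (-t))
      = -(t ^ 3 / 6) - Real.pi ^ 2 / 6 * t := by
  have h := polylog_neg_exp_add_succ (p := 2) (ε := -1)
    (q := fun t => -(t ^ 2 / 2) - Real.pi ^ 2 / 6)
    (Q := fun t => -(t ^ 3 / 6) - Real.pi ^ 2 / 6 * t)
    (fun t => by rw [← polylog_two_neg_exp_add]; ring)
    (fun t => (((hasDerivAt_pow 3 t).div_const 6).neg.sub
      ((hasDerivAt_id t).const_mul _)).congr_deriv (by ring))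
    (by simp) t
  rwa [neg_one_mul, ← sub_eq_add_neg] at h

lemma polylog_four_neg_exp_add (t : ℝ) :
    polylog 4 (-Real.exp t) + polylog 4 (-Real.exp (-t))
      = -(t ^ 4 / 24) - Real.pi ^ 2 / 12 * t ^ 2 - 7 * Real.pi ^ 4 / 360 := by
  have h := polylog_neg_exp_add_succ (p := 3) (ε := 1)
    (q := fun t => -(t ^ 3 / 6) - Real.pi ^ 2 / 6 * t)
    (Q := fun t => -(t ^ 4 / 24) - Real.pi ^ 2 / 12 * t ^ 2 - 7 * Real.pi ^ 4 / 360)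
    (fun t => by rw [one_mul, polylog_three_neg_exp_sub])
    (fun t => ((((hasDerivAt_pow 4 t).div_const 24).neg.sub
      ((hasDerivAt_pow 2 t).const_mul _)).sub_const _).congr_deriv (by ring))
    (by
      rw [polylog_eq_polylogSeries (by norm_num) (by norm_num), polylogSeries_four_neg_one]
      ring) t
  rwa [one_mul] at h

end Inversion

section AperyPolylog

variable {p : ℕ} {t : ℝ}

lemma one_sub_exp_lt_one (t : ℝ) : 1 - Real.exp t < 1 := sub_lt_self 1 (Real.exp_pos t)

lemma exp_sub_one_ne_zero (ht : t ≠ 0) : Real.exp t - 1 ≠ 0 :=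
  sub_ne_zero.2 (mt (Real.exp_eq_one_iff t).1 ht)

lemma polylog_one_one_sub_exp (t : ℝ) : polylog 1 (1 - Real.exp t) = -t := by
  rw [polylog_one (one_sub_exp_lt_one t), sub_sub_cancel, Real.log_exp]

lemma continuous_polylog_one_sub_exp (p : ℕ) : Continuous fun t => polylog p (1 - Real.exp t) :=
  (continuousOn_polylog p).comp_continuous (by fun_prop) one_sub_exp_lt_one

lemma hasDerivAt_polylog_one_sub_exp (p : ℕ) (ht : t ≠ 0) :
    HasDerivAt (fun t => polylog (p + 1) (1 - Real.exp t))
      (polylog p (1 - Real.exp t) * (Real.exp t / (Real.exp t - 1))) t := by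
  have hne := exp_sub_one_ne_zero ht
  refine (hasDerivAt_polylog_comp p ((Real.hasDerivAt_exp t).const_sub 1) (one_sub_exp_lt_one t)
    (by rwa [ne_eq, sub_eq_zero, eq_comm, ← sub_eq_zero])).congr_deriv ?_
  rw [← neg_sub (Real.exp t) 1, neg_div_neg_eq]

lemma hasDerivAt_polylog_one_sub_exp_neg (p : ℕ) (ht : t ≠ 0) :
    HasDerivAt (fun t => polylog (p + 1) (1 - Real.exp (-t)))
      (polylog p (1 - Real.exp (-t)) * (1 / (Real.exp t - 1))) t := by
  have hne := exp_sub_one_ne_zero ht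
  have hne' := exp_sub_one_ne_zero (neg_ne_zero.2 ht)
  refine ((hasDerivAt_polylog_one_sub_exp p (neg_ne_zero.2 ht)).comp t
    (hasDerivAt_neg t)).congr_deriv ?_
  have hfactor : Real.exp (-t) / (Real.exp (-t) - 1) = -(1 / (Real.exp t - 1)) := by
    have hinv : Real.exp (-t) * Real.exp t = 1 := by
      rw [← Real.exp_add, neg_add_cancel, Real.exp_zero]
    rw [← neg_div, div_eq_div_iff hne' hne]
    linear_combination hinv
  rw [hfactor]
  ring

lemma hasDerivAt_powSum_aperyCoeff_cosh (hp : p ≠ 0) (hcosh : Real.cosh t < 3) (ht : t ≠ 0) :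
    HasDerivAt (fun t => powSum (aperyCoeff (p + 1)) (2 - 2 * Real.cosh t))
      (powSum (aperyCoeff p) (2 - 2 * Real.cosh t)
        * ((Real.exp t + 1) / (Real.exp t - 1))) t := by
  have hne : 2 - 2 * Real.cosh t ≠ 0 := by linarith [Real.one_lt_cosh.2 ht]
  refine (((convergesOnBall_aperyCoeff (p + 1)).hasDerivAt_div
    ((isAperyCurve_cosh hcosh).abs_lt t right_mem_uIcc) hne (aperyCoeff_eq_nat_mul hp)).comp t
    (((Real.hasDerivAt_cosh t).const_mul 2).const_sub 2)).congr_deriv ?_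
  have hfactor : -(2 * Real.sinh t) / (2 - 2 * Real.cosh t)
      = (Real.exp t + 1) / (Real.exp t - 1) := by
    have hinv : Real.exp t * Real.exp (-t) = 1 := by
      rw [← Real.exp_add, add_neg_cancel, Real.exp_zero]
    rw [div_eq_div_iff hne (exp_sub_one_ne_zero ht), Real.sinh_eq, Real.cosh_eq]
    linear_combination 2 * hinv
  rw [← hfactor]
  ring

lemma continuousOn_powSum_aperyCoeff_cosh (p : ℕ) (ht : Real.cosh t < 3) :
    ContinuousOn (fun t => powSum (aperyCoeff p) (2 - 2 * Real.cosh t)) (uIcc 0 t) :=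
  (convergesOnBall_aperyCoeff p).continuousOn.comp (by fun_prop)
    fun _ hx => (isAperyCurve_cosh ht).abs_lt _ hx

lemma polylog_two_one_sub_exp_add (t : ℝ) :
    polylog 2 (1 - Real.exp t) + polylog 2 (1 - Real.exp (-t)) = -(t ^ 2 / 2) := by
  have hcont := continuous_polylog_one_sub_exp 2
  refine eq_of_hasDerivAt_eq (a := 0) (b := t) (f' := fun t => -t)
    (f := fun t => polylog 2 (1 - Real.exp t) + polylog 2 (1 - Real.exp (-t)))
    (hcont.add (hcont.comp continuous_neg)).continuousOn (by fun_prop) (fun x hx => ?_)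
    (fun x _ => ((hasDerivAt_pow 2 x).div_const 2).neg.congr_deriv (by ring))
    (by simp [polylog_zero_right])
  have hx0 : x ≠ 0 := ne_of_mem_of_not_mem hx left_notMem_uIoo
  have hne := exp_sub_one_ne_zero hx0
  refine ((hasDerivAt_polylog_one_sub_exp 1 hx0).add
    (hasDerivAt_polylog_one_sub_exp_neg 1 hx0)).congr_deriv ?_
  rw [polylog_one_one_sub_exp, polylog_one_one_sub_exp]
  field_simp
  ring

lemma powSum_aperyCoeff_three_cosh (ht : Real.cosh t < 3) :
    powSum (aperyCoeff 3) (2 - 2 * Real.cosh t)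
      = t * (polylog 2 (1 - Real.exp t) - polylog 2 (1 - Real.exp (-t)))
        - 2 * (polylog 3 (1 - Real.exp t) + polylog 3 (1 - Real.exp (-t))) := by
  have hcont := fun p => continuous_polylog_one_sub_exp p
  have hcont' := fun p => (hcont p).comp continuous_neg
  refine eq_of_hasDerivAt_eq (a := 0) (b := t)
    (f := fun t => powSum (aperyCoeff 3) (2 - 2 * Real.cosh t))
    (continuousOn_powSum_aperyCoeff_cosh 3 ht)
    ((continuous_id.mul ((hcont 2).sub (hcont' 2))).sub
      (((hcont 3).add (hcont' 3)).const_mul 2)).continuousOn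
    (fun x hx => hasDerivAt_powSum_aperyCoeff_cosh two_ne_zero
      ((cosh_le_cosh_of_mem_uIcc (uIoo_subset_uIcc_self hx)).trans_lt ht)
      (ne_of_mem_of_not_mem hx left_notMem_uIoo))
    (fun x hx => ?_) (by simp [powSum_zero, aperyCoeff, polylog_zero_right])
  have hx0 : x ≠ 0 := ne_of_mem_of_not_mem hx left_notMem_uIoo
  have hne := exp_sub_one_ne_zero hx0
  have hlanden := polylog_two_one_sub_exp_add x
  have hcosh := (cosh_le_cosh_of_mem_uIcc (uIoo_subset_uIcc_self hx)).trans_lt ht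
  refine (((hasDerivAt_id' x).fun_mul ((hasDerivAt_polylog_one_sub_exp 1 hx0).fun_sub
    (hasDerivAt_polylog_one_sub_exp_neg 1 hx0))).fun_sub
    (((hasDerivAt_polylog_one_sub_exp 2 hx0).fun_add
      (hasDerivAt_polylog_one_sub_exp_neg 2 hx0)).const_mul 2)).congr_deriv ?_
  rw [powSum_aperyCoeff_two_cosh hcosh, polylog_one_one_sub_exp, polylog_one_one_sub_exp,
    one_add_one_eq_two]
  field_simp
  linear_combination (-2 * (Real.exp x + 1)) * hlanden

lemma powSum_aperyCoeff_four_cosh (ht : Real.cosh t < 3) :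
    powSum (aperyCoeff 4) (2 - 2 * Real.cosh t)
      = t ^ 4 / 8 + 2 * t * (polylog 3 (1 - Real.exp t) - polylog 3 (1 - Real.exp (-t)))
        - 4 * (polylog 4 (1 - Real.exp t) + polylog 4 (1 - Real.exp (-t))) := by
  have hcont := fun p => continuous_polylog_one_sub_exp p
  have hcont' := fun p => (hcont p).comp continuous_neg
  refine eq_of_hasDerivAt_eq (a := 0) (b := t)
    (f := fun t => powSum (aperyCoeff 4) (2 - 2 * Real.cosh t))
    (continuousOn_powSum_aperyCoeff_cosh 4 ht)
    (((((continuous_pow 4).div_const 8).add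
      ((continuous_const.mul continuous_id).mul ((hcont 3).sub (hcont' 3)))).sub
      (((hcont 4).add (hcont' 4)).const_mul 4)).continuousOn)
    (fun x hx => hasDerivAt_powSum_aperyCoeff_cosh three_ne_zero
      ((cosh_le_cosh_of_mem_uIcc (uIoo_subset_uIcc_self hx)).trans_lt ht)
      (ne_of_mem_of_not_mem hx left_notMem_uIoo))
    (fun x hx => ?_) (by simp [powSum_zero, aperyCoeff, polylog_zero_right])
  have hx0 : x ≠ 0 := ne_of_mem_of_not_mem hx left_notMem_uIoo
  have hne := exp_sub_one_ne_zero hx0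
  have hlanden := polylog_two_one_sub_exp_add x
  have hcosh := (cosh_le_cosh_of_mem_uIcc (uIoo_subset_uIcc_self hx)).trans_lt ht
  refine ((((hasDerivAt_pow 4 x).div_const 8).fun_add (((hasDerivAt_id' x).const_mul 2).fun_mul
    ((hasDerivAt_polylog_one_sub_exp 2 hx0).fun_sub
      (hasDerivAt_polylog_one_sub_exp_neg 2 hx0)))).fun_sub
    (((hasDerivAt_polylog_one_sub_exp 3 hx0).fun_add
      (hasDerivAt_polylog_one_sub_exp_neg 3 hx0)).const_mul 4)).congr_deriv ?_
  rw [powSum_aperyCoeff_three_cosh hcosh]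
  field_simp
  linear_combination 8 * x * (Real.exp x - 1) * hlanden

end AperyPolylog

section GoldenRatio

lemma exp_neg_log_goldenRatio : Real.exp (-Real.log goldenRatio) = -goldenConj := by
  rw [Real.exp_neg, Real.exp_log Real.goldenRatio_pos, Real.inv_goldenRatio]

lemma exp_two_mul_log_goldenRatio : Real.exp (2 * Real.log goldenRatio) = goldenRatio ^ 2 := by
  rw [two_mul, Real.exp_add, Real.exp_log Real.goldenRatio_pos, sq]

lemma exp_neg_two_mul_log_goldenRatio :
    Real.exp (-(2 * Real.log goldenRatio)) = goldenConj ^ 2 := by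
  rw [← mul_neg, two_mul, Real.exp_add, exp_neg_log_goldenRatio, neg_mul_neg, sq]

lemma cosh_two_mul_log_goldenRatio : Real.cosh (2 * Real.log goldenRatio) = 3 / 2 := by
  rw [Real.cosh_eq, exp_two_mul_log_goldenRatio, exp_neg_two_mul_log_goldenRatio,
    Real.goldenRatio_sq, Real.goldenConj_sq]
  linarith [Real.goldenRatio_add_goldenConj]

lemma powSum_aperyCoeff_four_neg_one_eq_polylog :
    powSum (aperyCoeff 4) (-1)
      = 2 * Real.log goldenRatio ^ 4
        + 4 * Real.log goldenRatio * (polylog 3 (-goldenRatio) - polylog 3 (-goldenConj))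
        - 4 * (polylog 4 (-goldenRatio) + polylog 4 (-goldenConj)) := by
  have h := powSum_aperyCoeff_four_cosh (t := 2 * Real.log goldenRatio)
    (by rw [cosh_two_mul_log_goldenRatio]; norm_num)
  have hexp : 1 - Real.exp (2 * Real.log goldenRatio) = -goldenRatio := by
    rw [exp_two_mul_log_goldenRatio, Real.goldenRatio_sq, sub_add_cancel_right]
  have hexp_neg : 1 - Real.exp (-(2 * Real.log goldenRatio)) = -goldenConj := by
    rw [exp_neg_two_mul_log_goldenRatio, Real.goldenConj_sq, sub_add_cancel_right]
  rw [cosh_two_mul_log_goldenRatio, hexp, hexp_neg,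
    show (2 : ℝ) - 2 * (3 / 2) = -1 by norm_num] at h
  rw [h]
  ring

lemma powSum_aperyCoeff_four_neg_one :
    powSum (aperyCoeff 4) (-1)
      = 3 / 2 * Real.log goldenRatio ^ 4 - Real.pi ^ 2 / 3 * Real.log goldenRatio ^ 2
        + 7 * Real.pi ^ 4 / 90
        - 4 * Real.log goldenRatio
          * (polylogSeries 3 (-goldenConj) - polylogSeries 3 goldenConj)
        - 8 * polylogSeries 4 (-goldenConj) + 1 / 2 * polylogSeries 4 (goldenConj ^ 2) := by
  have hneg := Real.goldenConj_neg
  have hgt := Real.neg_one_lt_goldenConj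
  have hseries : ∀ p, 1 < p → polylog p goldenConj = polylogSeries p goldenConj
      ∧ polylog p (-goldenConj) = polylogSeries p (-goldenConj) := fun p hp =>
    ⟨polylog_eq_polylogSeries hp ⟨by linarith, by linarith⟩,
      polylog_eq_polylogSeries hp ⟨by linarith, by linarith⟩⟩
  have hthree := polylog_three_neg_exp_sub (Real.log goldenRatio)
  have hfour := polylog_four_neg_exp_add (Real.log goldenRatio)
  have hduplication := polylogSeries_add_neg (p := 4) (x := goldenConj) (by norm_num)
    (abs_le.2 ⟨hgt.le, by linarith⟩)
  simp only [Real.exp_log Real.goldenRatio_pos, exp_neg_log_goldenRatio, neg_neg,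
    hseries 3 (by norm_num), hseries 4 (by norm_num)] at hthree hfour
  rw [powSum_aperyCoeff_four_neg_one_eq_polylog, (hseries 3 (by norm_num)).2,
    (hseries 4 (by norm_num)).2]
  linear_combination 4 * Real.log goldenRatio * hthree - 4 * hfour + 1 / 4 * hduplication

end GoldenRatio

section Pochhammer

lemma poch_succ (a : ℝ) (n : ℕ) : poch a (n + 1) = poch a n * (a + n) :=
  Finset.prod_range_succ _ _

lemma poch_pos {a : ℝ} (ha : 0 < a) (n : ℕ) : 0 < poch a n :=
  Finset.prod_pos fun _ _ => by positivity

open Nat in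
lemma poch_one (n : ℕ) : poch 1 n = n ! := by
  rw [poch, ← Finset.prod_range_add_one_eq_factorial, Nat.cast_prod]
  exact Finset.prod_congr rfl fun i _ => by rw [Nat.cast_succ, add_comm]

lemma mul_poch_add_one (a : ℝ) (n : ℕ) : a * poch (a + 1) n = (a + n) * poch a n := by
  induction n with
  | zero => simp [poch]
  | succ n ih =>
    rw [poch_succ, poch_succ, ← mul_assoc, ih]
    push_cast
    ring

open Nat in
lemma poch_half_mul_centralBinom (n : ℕ) :
    poch (1 / 2) n * n ! * (2 * n + 1) * (2 * n + 1).centralBinom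
      = 2 * 16 ^ n * (poch (3 / 4) n * poch (5 / 4) n) := by
  induction n with
  | zero => simp [poch, Nat.centralBinom]
  | succ n ih =>
    rw [show 2 * (n + 1) + 1 = 2 * n + 1 + 1 + 1 by ring, cast_centralBinom_succ,
      cast_centralBinom_succ]
    simp only [poch_succ, Nat.factorial_succ]
    push_cast
    field_simp
    linear_combination 16 * (n + 1) * (4 * n + 3) * (4 * n + 5) * ih

lemma poch_term_eq (n : ℕ) :
    poch (1 / 2) n ^ 4 * poch 1 n ^ 2
      / (poch (3 / 4) n * poch (5 / 4) n * poch (3 / 2) n ^ 3 * n.factorial) * (1 / 16 : ℝ) ^ n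
      = 2 * aperyCoeff 4 (2 * n + 1) := by
  have hbinom := poch_half_mul_centralBinom n
  have hthree_quarters := poch_pos (a := 3 / 4) (by norm_num) n
  have hfive_quarters := poch_pos (a := 5 / 4) (by norm_num) n
  have hthree_halves : poch (3 / 2) n = (2 * n + 1) * poch (1 / 2) n := by
    have h := mul_poch_add_one (1 / 2) n
    norm_num at h
    linarith
  have hC := cast_centralBinom_pos (2 * n + 1)
  rw [poch_one, hthree_halves, aperyCoeff, one_div_pow]
  push_cast
  field_simp
  linear_combination hbinom

end Pochhammer

theorem sixF5_sixteenth_polylog :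
    ∑' n : ℕ,
        (poch (1/2) n)^4 * (poch 1 n)^2
          / (poch (3/4) n * poch (5/4) n * (poch (3/2) n)^3 * (Nat.factorial n))
          * (1/16 : ℝ) ^ n =
      8 * Li4 ((Real.sqrt 5 - 1)/2) - (1/2) * Li4 ((3 - Real.sqrt 5)/2)
        + 4 * Li3 ((Real.sqrt 5 - 1)/2) * Real.log ((Real.sqrt 5 + 1)/2)
        - 4 * Li3 ((1 - Real.sqrt 5)/2) * Real.log ((Real.sqrt 5 + 1)/2)
        - 47 * Real.pi^4 / 648
        - (3/2) * (Real.log ((Real.sqrt 5 + 1)/2))^4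
        + (Real.pi^2 / 3) * (Real.log ((Real.sqrt 5 + 1)/2))^2 := by
  have hratio : (√5 + 1) / 2 = goldenRatio := by rw [goldenRatio, add_comm]
  have hconj : (1 - √5) / 2 = goldenConj := rfl
  have hconj_neg : (√5 - 1) / 2 = -goldenConj := by rw [goldenConj]; ring
  have hconj_sq : (3 - √5) / 2 = goldenConj ^ 2 := by rw [Real.goldenConj_sq, goldenConj]; ring
  rw [tsum_congr poch_term_eq, tsum_two_mul_odd (convergesOnBall_aperyCoeff 4) (by norm_num),
    powSum_aperyCoeff_four_one, powSum_aperyCoeff_four_neg_one, Li3_eq_polylogSeries,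
    Li4_eq_polylogSeries, hratio, hconj, hconj_neg, hconj_sq]
  ring
end
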